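/- Every Möbius ladder M_n (n ≥ 3), every double wheel DW_n (n ≥ 3), and every graph in the class W is almost-planar; consequently, every 3-connected nonplanar minor of a Möbius ladder, of a double wheel, or of a graph in W is almost-planar. -/

import Mathlib

open SimpleGraph

/-- `H` is a minor of `G` (branch-set / model definition). -/
def IsMinor {W V : Type*} (H : SimpleGraph W) (G : SimpleGraph V) : Prop :=
  ∃ B : W → Set V,
    (∀ w, (B w).Nonempty) ∧
    (∀ w, (G.induce (B w)).Connected) ∧
    (Pairwise fun w₁ w₂ => Disjoint (B w₁) (B w₂)) ∧
    (∀ ⦃w₁ w₂ : W⦄, H.Adj w₁ w₂ → ∃ v₁ ∈ B w₁, ∃ v₂ ∈ B w₂, G.Adj v₁ v₂)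

def K5 : SimpleGraph (Fin 5) := ⊤

def K33 : SimpleGraph (Fin 3 ⊕ Fin 3) := completeBipartiteGraph (Fin 3) (Fin 3)

/-- A graph is planar iff it has neither a `K₅` nor a `K₃,₃` minor (Wagner's theorem). -/
def Planar {V : Type*} (G : SimpleGraph V) : Prop := ¬ IsMinor K5 G ∧ ¬ IsMinor K33 G

/-- `G / uw`: contract the edge `uw`, merging `w` into `u` (the vertex `w` becomes isolated). -/
def contractEdge {V : Type*} (G : SimpleGraph V) (u w : V) : SimpleGraph V :=
  SimpleGraph.fromRel fun a b =>
    a ≠ w ∧ b ≠ w ∧ (G.Adj a b ∨ (a = u ∧ G.Adj w b) ∨ (b = u ∧ G.Adj a w))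

/-- A nonplanar graph is almost-planar if for every edge, deletion or contraction is planar. -/
def AlmostPlanar {V : Type*} (G : SimpleGraph V) : Prop :=
  ¬ Planar G ∧ ∀ ⦃u v : V⦄, G.Adj u v →
    (Planar (G.deleteEdges {s(u, v)}) ∨ Planar (contractEdge G u v))

/-- `G` is `k`-connected: more than `k` vertices and deleting fewer than `k` vertices
leaves a connected graph. -/
def KConnected {V : Type*} (G : SimpleGraph V) (k : ℕ) : Prop :=
  k < Nat.card V ∧ ∀ s : Set V, s.ncard < k → (G.induce (sᶜ)).Connected

/-- `{G[A], G[B]}` is a `k`-separation of `G`. -/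
def IsSep {V : Type*} (G : SimpleGraph V) (k : ℕ) (A B : Set V) : Prop :=
  A ∪ B = Set.univ ∧ A ≠ Set.univ ∧ B ≠ Set.univ ∧ (A ∩ B).ncard = k ∧
  ∀ ⦃x y : V⦄, G.Adj x y → (x ∈ A ∧ y ∈ A) ∨ (x ∈ B ∧ y ∈ B)

/-- The star `K_{1,3}`, with centre `0`. -/
def K13 : SimpleGraph (Fin 4) := SimpleGraph.fromRel fun a _ => a = 0

def InternallyFourConnected {V : Type*} (G : SimpleGraph V) : Prop :=
  KConnected G 3 ∧ 5 ≤ Nat.card V ∧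
  ∀ A B : Set V, IsSep G 3 A B →
    Xor' (Nonempty (G.induce A ≃g K13)) (Nonempty (G.induce B ≃g K13))

/-- The wheel `W_n`: a cycle of length `n` plus a hub (`none`) joined to all of it. -/
def wheelGraph (n : ℕ) : SimpleGraph (Option (Fin n)) :=
  SimpleGraph.fromRel fun a b =>
    match a, b with
    | some i, some j => j.val = (i.val + 1) % n
    | none, some _ => True
    | _, _ => False

def IsWheel {V : Type*} (G : SimpleGraph V) : Prop :=
  ∃ n, 3 ≤ n ∧ Nonempty (G ≃g wheelGraph n)

/-- The double wheel `DW_n`: a cycle of length `n` plus two adjacent hubs joined to all of it. -/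
def doubleWheel (n : ℕ) : SimpleGraph (Fin n ⊕ Fin 2) :=
  SimpleGraph.fromRel fun a b =>
    match a, b with
    | .inl i, .inl j => j.val = (i.val + 1) % n
    | .inl _, .inr _ => True
    | .inr _, .inr _ => True
    | _, _ => False

/-- The Möbius ladder `M_n`: a cycle of length `2n` plus all "opposite" chords. -/
def mobiusLadder (n : ℕ) : SimpleGraph (Fin (2 * n)) :=
  SimpleGraph.fromRel fun i j =>
    j.val = (i.val + 1) % (2 * n) ∨ j.val = (i.val + n) % (2 * n)

/-- `C²_m`: a cycle of length `m` plus all chords between vertices at distance two. -/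
def squareCycle (m : ℕ) : SimpleGraph (Fin m) :=
  SimpleGraph.fromRel fun i j =>
    j.val = (i.val + 1) % m ∨ j.val = (i.val + 2) % m

/-- The alternating double wheel `AW_{2n}`: a cycle of length `2n` plus two adjacent hubs,
each joined to alternating cycle vertices. -/
def altDoubleWheel (n : ℕ) : SimpleGraph (Fin (2 * n) ⊕ Fin 2) :=
  SimpleGraph.fromRel fun a b =>
    match a, b with
    | .inl i, .inl j => j.val = (i.val + 1) % (2 * n)
    | .inl i, .inr k => i.val % 2 = k.val
    | .inr _, .inr _ => True
    | _, _ => False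

/-- The class `𝒲`: three wheels glued along a common triangle `V₀`, with no other edges. -/
def InClassW {V : Type*} (G : SimpleGraph V) : Prop :=
  ∃ P : V → Fin 4,
    (P ⁻¹' {0}).ncard = 3 ∧
    (∀ x y : V, P x = 0 → P y = 0 → x ≠ y → G.Adj x y) ∧
    (∀ i : Fin 4, i ≠ 0 → IsWheel (G.induce {v | P v = 0 ∨ P v = i})) ∧
    (∀ ⦃x y : V⦄, G.Adj x y → ∃ i : Fin 4, i ≠ 0 ∧ (P x = 0 ∨ P x = i) ∧ (P y = 0 ∨ P y = i))

/-- `EX₁`: `K₃,₃` plus a vertex joined to all of one colour class. -/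
def EX1 : SimpleGraph (Option (Fin 3 ⊕ Fin 3)) :=
  SimpleGraph.fromRel fun a b =>
    match a, b with
    | some (.inl _), some (.inr _) => True
    | none, some (.inl _) => True
    | _, _ => False

/-- `EX₂`: `K₅` plus a vertex joined to three of its vertices. -/
def EX2 : SimpleGraph (Option (Fin 5)) :=
  SimpleGraph.fromRel fun a b =>
    match a, b with
    | some i, some j => i ≠ j
    | none, some j => j.val < 3
    | _, _ => False

/-- `EX₈`: `K₃,₃` plus a vertex joined to two vertices of one class and one of the other. -/
def EX8 : SimpleGraph (Option (Fin 3 ⊕ Fin 3)) :=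
  SimpleGraph.fromRel fun a b =>
    match a, b with
    | some (.inl _), some (.inr _) => True
    | none, some x => x = Sum.inl 0 ∨ x = Sum.inl 1 ∨ x = Sum.inr 0
    | _, _ => False

/-- `K₅ʰ`: subdivide the edges `01` and `02` of `K₅` and join the two subdivision vertices. -/
def K5h : SimpleGraph (Fin 5 ⊕ Fin 2) :=
  SimpleGraph.fromRel fun a b =>
    match a, b with
    | .inl i, .inl j =>
        i ≠ j ∧ ¬(i = 0 ∧ j = 1) ∧ ¬(i = 1 ∧ j = 0) ∧ ¬(i = 0 ∧ j = 2) ∧ ¬(i = 2 ∧ j = 0)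
    | .inl i, .inr k => (k = 0 ∧ (i = 0 ∨ i = 1)) ∨ (k = 1 ∧ (i = 0 ∨ i = 2))
    | .inr _, .inr _ => True
    | _, _ => False

/-- `K₃,₃ʰ`: subdivide two edges of `K₃,₃` at a common endpoint and join
the two subdivision vertices. -/
def K33h : SimpleGraph ((Fin 3 ⊕ Fin 3) ⊕ Fin 2) :=
  SimpleGraph.fromRel fun a b =>
    match a, b with
    | .inl (.inl i), .inl (.inr j) => ¬(i = 0 ∧ (j = 0 ∨ j = 1))
    | .inl (.inr j), .inl (.inl i) => ¬(i = 0 ∧ (j = 0 ∨ j = 1))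
    | .inl x, .inr k =>
        (k = 0 ∧ (x = Sum.inl 0 ∨ x = Sum.inr 0)) ∨ (k = 1 ∧ (x = Sum.inl 0 ∨ x = Sum.inr 1))
    | .inr _, .inr _ => True
    | _, _ => False

/-- `K₅⁺`: `K₅` plus a pendant vertex. -/
def K5plus : SimpleGraph (Option (Fin 5)) :=
  SimpleGraph.fromRel fun a b =>
    match a, b with
    | some i, some j => i ≠ j
    | none, some j => j = 0
    | _, _ => False

/-- `K₃,₃⁺`: `K₃,₃` plus a pendant vertex. -/
def K33plus : SimpleGraph (Option (Fin 3 ⊕ Fin 3)) :=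
  SimpleGraph.fromRel fun a b =>
    match a, b with
    | some (.inl _), some (.inr _) => True
    | none, some x => x = Sum.inl 0
    | _, _ => False

/-- `K₅ ⊕ e`: disjoint union of `K₅` and one edge. -/
def K5oplus : SimpleGraph (Fin 5 ⊕ Fin 2) :=
  SimpleGraph.fromRel fun a b =>
    match a, b with
    | .inl i, .inl j => i ≠ j
    | .inr _, .inr _ => True
    | _, _ => False

/-- `K₃,₃ ⊕ e`: disjoint union of `K₃,₃` and one edge. -/
def K33oplus : SimpleGraph ((Fin 3 ⊕ Fin 3) ⊕ Fin 2) :=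
  SimpleGraph.fromRel fun a b =>
    match a, b with
    | .inl (.inl _), .inl (.inr _) => True
    | .inr _, .inr _ => True
    | _, _ => False

/-- The triad addition of `H` at `x y z`: add a new vertex joined to `x`, `y`, `z`. -/
def triadAddition {U : Type*} (H : SimpleGraph U) (x y z : U) : SimpleGraph (Option U) :=
  SimpleGraph.fromRel fun a b =>
    match a, b with
    | some u, some v => H.Adj u v
    | none, some u => u = x ∨ u = y ∨ u = z
    | _, _ => False

def IsTriadAdditionOf {V U : Type*} (G : SimpleGraph V) (H : SimpleGraph U) : Prop :=
  ∃ x y z : U, x ≠ y ∧ y ≠ z ∧ x ≠ z ∧ Nonempty (G ≃g triadAddition H x y z)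

/-- `G` is obtained from `H` by subdividing (possibly repeatedly) edges of `H`,
all of which lie in `S`. -/
def IsSubdivisionWithin {V W : Type*} (G : SimpleGraph V) (H : SimpleGraph W)
    (S : Set (Sym2 W)) : Prop :=
  ∃ (f : W ↪ V) (p : ∀ ⦃u v : W⦄, H.Adj u v → G.Walk (f u) (f v)),
    (∀ ⦃u v : W⦄ (h : H.Adj u v), (p h).IsPath) ∧
    (∀ ⦃u v : W⦄ (h : H.Adj u v), p h.symm = (p h).reverse) ∧
    (∀ ⦃u v : W⦄ (h : H.Adj u v), s(u, v) ∉ S → (p h).length = 1) ∧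
    (∀ ⦃u v : W⦄ (h : H.Adj u v) (w : W), f w ∈ (p h).support → w = u ∨ w = v) ∧
    (∀ ⦃u v u' v' : W⦄ (h : H.Adj u v) (h' : H.Adj u' v'), s(u, v) ≠ s(u', v') →
      ∀ x : V, x ∈ (p h).support → x ∈ (p h').support → x ∈ Set.range f) ∧
    (∀ x : V, x ∈ Set.range f ∨ ∃ (u v : W) (h : H.Adj u v), x ∈ (p h).support) ∧
    (∀ e ∈ G.edgeSet, ∃ (u v : W) (h : H.Adj u v), e ∈ (p h).edges)

/-- `G` is a subdivision of `H`. -/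
def IsSubdivision {V W : Type*} (G : SimpleGraph V) (H : SimpleGraph W) : Prop :=
  IsSubdivisionWithin G H Set.univ

/-- `D(H)`: the set of edges of `H` whose deletion leaves a planar graph. -/
def Dset {U : Type*} (H : SimpleGraph U) : Set (Sym2 U) :=
  {e | e ∈ H.edgeSet ∧ Planar (H.deleteEdges {e})}

/-- `G[A]` together with all edges between vertices of `T` (`T ⊆ A` intended). -/
def deltaGraph {V : Type*} (G : SimpleGraph V) (A T : Set V) : SimpleGraph A :=
  SimpleGraph.fromRel fun a b => G.Adj a.1 b.1 ∨ (a.1 ∈ T ∧ b.1 ∈ T)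

/-- `G[A]^Y` for the separation `{G[A], G[B]}`: add a new vertex joined to `A ∩ B`. -/
def sepY {V : Type*} (G : SimpleGraph V) (A B : Set V) : SimpleGraph (Option A) :=
  SimpleGraph.fromRel fun x y =>
    match x, y with
    | some a, some b => G.Adj a.1 b.1
    | none, some a => a.1 ∈ A ∩ B
    | _, _ => False

/-- `G₂` is obtained from `G` by adding isolated vertices. -/
def AddIsolated {V₂ V : Type*} (G₂ : SimpleGraph V₂) (G : SimpleGraph V) : Prop :=
  ∃ f : V ↪ V₂, (∀ a b : V, G₂.Adj (f a) (f b) ↔ G.Adj a b) ∧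
    ∀ x : V₂, x ∉ Set.range f → ∀ y : V₂, ¬ G₂.Adj x y

/-- The set of non-isolated vertices of `G` (so `G* = G.induce (core G)`). -/
def core {V : Type*} (G : SimpleGraph V) : Set V := {v | ∃ w, G.Adj v w}

/-- `G` is obtained from `G'` by 3-summing wheels onto distinct triangles of `G'`. -/
def SumWheelsOnto {V U : Type*} (G : SimpleGraph V) (G' : SimpleGraph U) : Prop :=
  ∃ (g : U ↪ V) (k : ℕ) (Wp : Fin k → Set V) (T : Fin k → Set U),
    (∀ i, (T i).ncard = 3) ∧
    (∀ i, ∀ x ∈ T i, ∀ y ∈ T i, x ≠ y → G'.Adj x y) ∧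
    Function.Injective T ∧
    (∀ i, Disjoint (Wp i) (Set.range ⇑g)) ∧
    (Pairwise fun i j => Disjoint (Wp i) (Wp j)) ∧
    (Set.range ⇑g ∪ ⋃ i, Wp i) = Set.univ ∧
    (∀ i, IsWheel (deltaGraph G (Wp i ∪ ⇑g '' T i) (⇑g '' T i))) ∧
    (∀ a b : U, G.Adj (g a) (g b) → G'.Adj a b) ∧
    (∀ a b : U, G'.Adj a b → (G.Adj (g a) (g b) ∨ ∃ i, a ∈ T i ∧ b ∈ T i)) ∧
    (∀ ⦃x y : V⦄, G.Adj x y → (x ∈ Set.range ⇑g ∧ y ∈ Set.range ⇑g) ∨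
      ∃ i, x ∈ Wp i ∪ ⇑g '' T i ∧ y ∈ Wp i ∪ ⇑g '' T i) ∧
    (∀ i, ∀ x ∈ Wp i, ∀ ⦃y : V⦄, G.Adj x y → y ∈ Wp i ∪ ⇑g '' T i)

/-- `H` has an edge whose deletion and contraction are both nonplanar. -/
def HasBadEdge {V : Type*} (H : SimpleGraph V) : Prop :=
  ∃ u v : V, H.Adj u v ∧ ¬ Planar (H.deleteEdges {s(u, v)}) ∧ ¬ Planar (contractEdge H u v)


/-! ### Van Kampen certificates -/

/-- A van Kampen certificate modulo two, for planarity. -/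
def VK {V : Type*} (G : SimpleGraph V) : Prop :=
  ∃ (L : V → V → ZMod 2) (x : V → V → V → ZMod 2),
    (∀ a b, a ≠ b → L a b + L b a = 1) ∧
    ∀ a b c d, G.Adj a b → G.Adj c d → a ≠ c → a ≠ d → b ≠ c → b ≠ d →
      x c a b + x d a b + x a c d + x b c d = L a c + L a d + L b c + L b d

theorem VK.pull {V W : Type*} {G : SimpleGraph V} {H : SimpleGraph W} (hG : VK G) (f : W → V)
    (hf : Function.Injective f) (hadj : ∀ a b, H.Adj a b → G.Adj (f a) (f b)) : VK H := by
  obtain ⟨L, x, hL, hx⟩ := hG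
  refine ⟨fun a b => L (f a) (f b), fun a b c => x (f a) (f b) (f c),
    fun a b h => hL _ _ (hf.ne h), ?_⟩
  intro a b c d h1 h2 h3 h4 h5 h6
  exact hx _ _ _ _ (hadj _ _ h1) (hadj _ _ h2) (hf.ne h3) (hf.ne h4) (hf.ne h5) (hf.ne h6)

theorem VK.mono {V : Type*} {G H : SimpleGraph V} (hG : VK G) (h : H ≤ G) : VK H :=
  hG.pull id Function.injective_id (fun _ _ hab => h hab)

theorem zmod_two_double (a : ZMod 2) : a + a = 0 := by
  revert a; decide

theorem VK.not_K5 (h : VK K5) : False := by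
  obtain ⟨L, x, hL, hx⟩ := h
  have key : ∀ a b c d : Fin 5, a ≠ b → c ≠ d → a ≠ c → a ≠ d → b ≠ c → b ≠ d →
      x c a b + x d a b + x a c d + x b c d = L a c + L a d + L b c + L b d :=
    fun a b c d h1 h2 => hx a b c d (by simpa [K5] using h1) (by simpa [K5] using h2)
  have e1 := key 0 1 2 3 (by decide) (by decide) (by decide) (by decide) (by decide) (by decide)
  have e2 := key 0 1 2 4 (by decide) (by decide) (by decide) (by decide) (by decide) (by decide)
  have e3 := key 0 1 3 4 (by decide) (by decide) (by decide) (by decide) (by decide) (by decide)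
  have e4 := key 0 2 1 3 (by decide) (by decide) (by decide) (by decide) (by decide) (by decide)
  have e5 := key 0 2 1 4 (by decide) (by decide) (by decide) (by decide) (by decide) (by decide)
  have e6 := key 0 2 3 4 (by decide) (by decide) (by decide) (by decide) (by decide) (by decide)
  have e7 := key 0 3 1 2 (by decide) (by decide) (by decide) (by decide) (by decide) (by decide)
  have e8 := key 0 3 1 4 (by decide) (by decide) (by decide) (by decide) (by decide) (by decide)
  have e9 := key 0 3 2 4 (by decide) (by decide) (by decide) (by decide) (by decide) (by decide)
  have e10 := key 0 4 1 2 (by decide) (by decide) (by decide) (by decide) (by decide) (by decide)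
  have e11 := key 0 4 1 3 (by decide) (by decide) (by decide) (by decide) (by decide) (by decide)
  have e12 := key 0 4 2 3 (by decide) (by decide) (by decide) (by decide) (by decide) (by decide)
  have e13 := key 1 2 3 4 (by decide) (by decide) (by decide) (by decide) (by decide) (by decide)
  have e14 := key 1 3 2 4 (by decide) (by decide) (by decide) (by decide) (by decide) (by decide)
  have e15 := key 1 4 2 3 (by decide) (by decide) (by decide) (by decide) (by decide) (by decide)
  have e16 : ∀ a b : Fin 5, a < b → L b a = 1 - L a b := fun a b h => by
    have := hL a b h.ne; linear_combination this
  rw [e16 1 2 (by decide), e16 1 3 (by decide), e16 1 4 (by decide), e16 2 3 (by decide),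
    e16 2 4 (by decide), e16 3 4 (by decide)] at *
  have E := congrArg₂ (· + ·) (congrArg₂ (· + ·) (congrArg₂ (· + ·) (congrArg₂ (· + ·) e1 e2)
    (congrArg₂ (· + ·) e3 e4)) (congrArg₂ (· + ·) (congrArg₂ (· + ·) e5 e6)
    (congrArg₂ (· + ·) e7 e8))) (congrArg₂ (· + ·) (congrArg₂ (· + ·) (congrArg₂ (· + ·) e9 e10)
    (congrArg₂ (· + ·) e11 e12)) (congrArg₂ (· + ·) (congrArg₂ (· + ·) e13 e14) e15))
  ring_nf at E
  reduce_mod_char at E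
  exact absurd E (by decide)

theorem VK.not_K33 (h : VK K33) : False := by
  obtain ⟨L, x, hL, hx⟩ := h
  have key : ∀ i k j l : Fin 3, i ≠ k → j ≠ l →
      x (.inl k) (.inl i) (.inr j) + x (.inr l) (.inl i) (.inr j) +
        x (.inl i) (.inl k) (.inr l) + x (.inr j) (.inl k) (.inr l) =
      L (.inl i) (.inl k) + L (.inl i) (.inr l) + (1 - L (.inl k) (.inr j)) +
        L (.inr j) (.inr l) := by
    intro i k j l h1 h2
    have := hx (.inl i) (.inr j) (.inl k) (.inr l) (by simp [K33]) (by simp [K33])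
      (by simpa using h1) (by simp) (by simp) (by simpa using h2)
    have h3 := hL (.inl k) (.inr j) (by simp)
    linear_combination this + h3
  have e1 := key 0 1 0 1 (by decide) (by decide)
  have e2 := key 0 1 0 2 (by decide) (by decide)
  have e3 := key 0 1 1 0 (by decide) (by decide)
  have e4 := key 0 1 1 2 (by decide) (by decide)
  have e5 := key 0 1 2 0 (by decide) (by decide)
  have e6 := key 0 1 2 1 (by decide) (by decide)
  have e7 := key 0 2 0 1 (by decide) (by decide)
  have e8 := key 0 2 0 2 (by decide) (by decide)
  have e9 := key 0 2 1 0 (by decide) (by decide)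
  have e10 := key 0 2 1 2 (by decide) (by decide)
  have e11 := key 0 2 2 0 (by decide) (by decide)
  have e12 := key 0 2 2 1 (by decide) (by decide)
  have e13 := key 1 2 0 1 (by decide) (by decide)
  have e14 := key 1 2 0 2 (by decide) (by decide)
  have e15 := key 1 2 1 0 (by decide) (by decide)
  have e16 := key 1 2 1 2 (by decide) (by decide)
  have e17 := key 1 2 2 0 (by decide) (by decide)
  have e18 := key 1 2 2 1 (by decide) (by decide)
  have f1 : L (.inr 1) (.inr 0) = 1 - L (.inr 0) (.inr 1) := by
    linear_combination hL (.inr 0) (.inr 1) (by simp)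
  have f2 : L (.inr 2) (.inr 0) = 1 - L (.inr 0) (.inr 2) := by
    linear_combination hL (.inr 0) (.inr 2) (by simp)
  have f3 : L (.inr 2) (.inr 1) = 1 - L (.inr 1) (.inr 2) := by
    linear_combination hL (.inr 1) (.inr 2) (by simp)
  have E := (congrArg₂ (· + ·) (congrArg₂ (· + ·) (congrArg₂ (· + ·) (congrArg₂ (· + ·) e1
    e2)
    (congrArg₂ (· + ·) e3
    e4))
    (congrArg₂ (· + ·) (congrArg₂ (· + ·) e5
    e6)
    (congrArg₂ (· + ·) e7
    (congrArg₂ (· + ·) e8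
    e9))))
    (congrArg₂ (· + ·) (congrArg₂ (· + ·) (congrArg₂ (· + ·) e10
    e11)
    (congrArg₂ (· + ·) e12
    e13))
    (congrArg₂ (· + ·) (congrArg₂ (· + ·) e14
    e15)
    (congrArg₂ (· + ·) e16
    (congrArg₂ (· + ·) e17
    e18)))))
  ring_nf at E
  reduce_mod_char at E
  rw [f1, f2, f3] at E
  ring_nf at E
  reduce_mod_char at E
  exact absurd E (by decide)

/-! ### Minor monotonicity -/

/-- `a` and `b` are joined by a walk of `G` inside `S`. -/
def Linked {V : Type*} (G : SimpleGraph V) (S : Set V) (a b : V) : Prop :=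
  ∃ p : G.Walk a b, ∀ y ∈ p.support, y ∈ S

theorem Linked.refl {V : Type*} {G : SimpleGraph V} {S : Set V} {a : V} (h : a ∈ S) :
    Linked G S a a := ⟨.nil, by simpa using h⟩

theorem Linked.trans {V : Type*} {G : SimpleGraph V} {S : Set V} {a b c : V}
    (h1 : Linked G S a b) (h2 : Linked G S b c) : Linked G S a c := by
  obtain ⟨p, hp⟩ := h1
  obtain ⟨q, hq⟩ := h2
  refine ⟨p.append q, fun y hy => ?_⟩
  rw [SimpleGraph.Walk.mem_support_append_iff] at hy
  exact hy.elim (hp y) (hq y)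

theorem Linked.symm {V : Type*} {G : SimpleGraph V} {S : Set V} {a b : V}
    (h1 : Linked G S a b) : Linked G S b a := by
  obtain ⟨p, hp⟩ := h1
  exact ⟨p.reverse, fun y hy => hp y (by simpa using hy)⟩

theorem Linked.mono {V : Type*} {G : SimpleGraph V} {S T : Set V} {a b : V}
    (h1 : Linked G S a b) (h : S ⊆ T) : Linked G T a b := by
  obtain ⟨p, hp⟩ := h1
  exact ⟨p, fun y hy => h (hp y hy)⟩

theorem Linked.of_adj {V : Type*} {G : SimpleGraph V} {S : Set V} {a b : V}
    (h : G.Adj a b) (ha : a ∈ S) (hb : b ∈ S) : Linked G S a b :=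
  ⟨.cons h .nil, by simp [ha, hb]⟩

theorem Linked.of_connected {V : Type*} {G : SimpleGraph V} {S : Set V} {a b : V}
    (h : (G.induce S).Connected) (ha : a ∈ S) (hb : b ∈ S) : Linked G S a b := by
  obtain ⟨p⟩ := h.preconnected ⟨a, ha⟩ ⟨b, hb⟩
  have key : ∀ a b : S, (G.induce S).Walk a b → Linked G S a b := by
    intro a b p
    induction p with
    | nil => exact Linked.refl (Subtype.coe_prop _)
    | @cons u v w huv q ih => exact (Linked.of_adj (by simpa using huv) u.2 v.2).trans ih
  exact key _ _ p

theorem Linked.connected {V : Type*} {G : SimpleGraph V} {S : Set V} {r : V} (hr : r ∈ S)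
    (h : ∀ v ∈ S, Linked G S v r) : (G.induce S).Connected := by
  have key : ∀ a b (p : G.Walk a b) (hp : ∀ y ∈ p.support, y ∈ S),
      (G.induce S).Reachable ⟨a, hp a p.start_mem_support⟩ ⟨b, hp b p.end_mem_support⟩ := by
    intro a b p
    induction p with
    | nil => intro hp; exact SimpleGraph.Reachable.refl _
    | cons hab q ih =>
      intro hp
      have h1 := ih (fun y hy => hp y (by simp [hy]))
      refine SimpleGraph.Reachable.trans (SimpleGraph.Adj.reachable ?_) h1
      simpa using hab
  have : Nonempty S := ⟨⟨r, hr⟩⟩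
  refine ⟨fun a b => ?_⟩
  obtain ⟨p, hp⟩ := h a a.2
  obtain ⟨q, hq⟩ := h b b.2
  exact (key _ _ p hp).trans (key _ _ q hq).symm

/-- Walks are mapped to walks when adjacent vertices have equal or adjacent images. -/
theorem Linked.map {V : Type*} {G H : SimpleGraph V} {S T : Set V} {a b : V} (f : V → V)
    (h : Linked G S a b) (hf : ∀ y ∈ S, f y ∈ T)
    (hadj : ∀ y z, y ∈ S → z ∈ S → G.Adj y z → f y = f z ∨ H.Adj (f y) (f z)) :
    Linked H T (f a) (f b) := by
  obtain ⟨p, hp⟩ := h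
  induction p with
  | nil => exact Linked.refl (hf _ (hp _ (by simp)))
  | @cons u v w huv q ih =>
    have hu : u ∈ S := hp _ (by simp)
    have hv : v ∈ S := hp _ (by simp)
    have := ih (fun y hy => hp y (by simp [hy]))
    rcases hadj u v hu hv huv with h1 | h1
    · rw [h1]; exact this
    · exact (Linked.of_adj h1 (hf _ hu) (hf _ hv)).trans this

/-- Sum of `g` over the steps of a walk. -/
def wsum {V : Type*} {G : SimpleGraph V} (g : V → V → ZMod 2) :
    {a b : V} → G.Walk a b → ZMod 2
  | _, _, .nil => 0
  | _, _, .cons (u := u) (v := v) _ p => g u v + wsum g p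

theorem VK.of_linked {V W : Type*} {G : SimpleGraph V} {H : SimpleGraph W} (hG : VK G)
    (B : W → Set V) (r : W → V) (hr : ∀ w, r w ∈ B w)
    (hB : Pairwise fun w₁ w₂ => Disjoint (B w₁) (B w₂))
    (hH : ∀ u w, H.Adj u w → Linked G (B u ∪ B w) (r u) (r w)) : VK H := by
  classical
  obtain ⟨L, x, hL, hx⟩ := hG
  choose p hp using hH
  have hrinj : ∀ a b, a ≠ b → r a ≠ r b := fun a b hab h =>
    Set.disjoint_left.1 (hB hab) (hr a) (h ▸ hr b)
  refine ⟨fun a b => L (r a) (r b),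
    fun c a b => if h : H.Adj a b then wsum (x (r c)) (p a b h) else 0,
    fun a b h => hL _ _ (hrinj a b h), ?_⟩
  intro a b c d hab hcd h1 h2 h3 h4
  simp only [dif_pos hab, dif_pos hcd]
  -- an edge against a walk
  have A : ∀ s t, G.Adj s t → ∀ u v (q : G.Walk u v), (∀ y ∈ q.support, y ≠ s ∧ y ≠ t) →
      x u s t + x v s t + wsum (x s) q + wsum (x t) q = L s u + L s v + L t u + L t v := by
    intro s t hst u v q
    induction q with
    | @nil u =>
      intro _
      simp only [wsum, add_zero]
      linear_combination zmod_two_double (x u s t) - zmod_two_double (L s u) - zmod_two_double (L t u)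
    | @cons u v w huv q ih =>
      intro hq
      have i1 := ih (fun y hy => hq y (by simp [hy]))
      have hu := hq u (by simp)
      have hv := hq v (by simp)
      have i2 := hx s t u v hst huv hu.1.symm hv.1.symm hu.2.symm hv.2.symm
      simp only [wsum]
      linear_combination i1 + i2 - zmod_two_double (x v s t) + zmod_two_double (L s v)
        + zmod_two_double (L t v)
  have Bq : ∀ s t (q' : G.Walk s t) u v (q : G.Walk u v),
      (∀ y ∈ q.support, y ∉ q'.support) →
      wsum (x u) q' + wsum (x v) q' + wsum (x s) q + wsum (x t) q =
        L s u + L s v + L t u + L t v := by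
    intro s t q'
    induction q' with
    | @nil s =>
      intro u v q _
      simp only [wsum, zero_add, zmod_two_double]
      linear_combination -zmod_two_double (L s u) - zmod_two_double (L s v)
    | @cons s t z hst q' ih =>
      intro u v q hq
      have i1 := ih u v q (fun y hy => fun hh => hq y hy (by simp [hh]))
      have i2 := A s t hst u v q (fun y hy => ⟨fun hh => hq y hy (by simp [hh]),
        fun hh => hq y hy (by simp [hh])⟩)
      simp only [wsum]
      linear_combination i1 + i2 - zmod_two_double (wsum (x t) q) + zmod_two_double (L t u)
        + zmod_two_double (L t v)
  refine Bq _ _ (p a b hab) _ _ (p c d hcd) ?_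
  intro y hy hy'
  have m1 := hp c d hcd y hy
  have m2 := hp a b hab y hy'
  rcases m1 with m1 | m1 <;> rcases m2 with m2 | m2
  · exact Set.disjoint_left.1 (hB h1) m2 m1
  · exact Set.disjoint_left.1 (hB h3) m2 m1
  · exact Set.disjoint_left.1 (hB h2) m2 m1
  · exact Set.disjoint_left.1 (hB h4) m2 m1

theorem VK.minor {V W : Type*} {G : SimpleGraph V} {H : SimpleGraph W} (hG : VK G)
    (h : IsMinor H G) : VK H := by
  obtain ⟨B, hne, hc, hd, he⟩ := h
  choose r hr using hne
  refine hG.of_linked B r hr hd fun u w huw => ?_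
  obtain ⟨s, hs, t, ht, hst⟩ := he huw
  refine ((Linked.of_connected (hc u) (hr u) hs).mono Set.subset_union_left).trans ?_
  refine (Linked.of_adj hst (Or.inl hs) (Or.inr ht)).trans ?_
  exact (Linked.of_connected (hc w) ht (hr w)).mono Set.subset_union_right

theorem VK.planar {V : Type*} {G : SimpleGraph V} (hG : VK G) : Planar G :=
  ⟨fun h => (hG.minor h).not_K5, fun h => (hG.minor h).not_K33⟩

/-- Every edge has a planar deletion or contraction, with certificates. -/
def AlmostVK {V : Type*} (G : SimpleGraph V) : Prop :=
  ∀ ⦃u v : V⦄, G.Adj u v → VK (G.deleteEdges {s(u, v)}) ∨ VK (contractEdge G u v)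

theorem AlmostVK.almostPlanar {V : Type*} {G : SimpleGraph V} (h : AlmostVK G)
    (hn : ¬ Planar G) : AlmostPlanar G :=
  ⟨hn, fun _ _ huv => (h huv).imp VK.planar VK.planar⟩

theorem contractEdge_adj {V : Type*} (G : SimpleGraph V) (u w a b : V) :
    (contractEdge G u w).Adj a b ↔ a ≠ b ∧ a ≠ w ∧ b ≠ w ∧
      (G.Adj a b ∨ (a = u ∧ G.Adj w b) ∨ (b = u ∧ G.Adj a w)) := by
  unfold contractEdge
  rw [SimpleGraph.fromRel_adj]
  have := G.adj_comm
  grind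

theorem AlmostVK.minor {V W : Type*} {H : SimpleGraph V} {G : SimpleGraph W} (hH : AlmostVK H)
    (h : IsMinor G H) : AlmostVK G := by
  classical
  obtain ⟨B, hne, hc, hd, he⟩ := h
  intro u v huv
  obtain ⟨a, ha, b, hb, hab⟩ := he huv
  have huv' : u ≠ v := huv.ne
  have hmem : ∀ w w' y, y ∈ B w → y ∈ B w' → w = w' := fun w w' y h1 h2 => by
    by_contra hcon
    exact Set.disjoint_left.1 (hd hcon) h1 h2
  choose r₀ hr₀ using hne
  rcases hH hab with h1 | h1
  · left
    refine h1.of_linked B r₀ hr₀ hd fun s t hst => ?_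
    rw [SimpleGraph.deleteEdges_adj] at hst
    obtain ⟨hst, hne⟩ := hst
    have hne' : ¬ (s = u ∧ t = v ∨ s = v ∧ t = u) := by
      simpa [Sym2.eq_iff] using hne
    have inner : ∀ w y z, y ∈ B w → z ∈ B w →
        Linked (H.deleteEdges {s(a, b)}) (B w) y z := by
      intro w y z hy hz
      have := Linked.of_connected (hc w) hy hz
      refine this.map (H := H.deleteEdges {s(a, b)}) (T := B w) id (fun _ h => h) ?_
      intro y z hy hz hyz
      right
      rw [SimpleGraph.deleteEdges_adj]
      refine ⟨hyz, ?_⟩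
      simp only [Set.mem_singleton_iff, Sym2.eq_iff, id]
      rintro (⟨rfl, rfl⟩ | ⟨rfl, rfl⟩)
      · exact huv' ((hmem _ _ _ ha hy).trans (hmem _ _ _ hb hz).symm)
      · exact huv' ((hmem _ _ _ ha hz).trans (hmem _ _ _ hb hy).symm)
    obtain ⟨y, hy, z, hz, hyz⟩ := he hst
    refine ((inner s _ _ (hr₀ s) hy).mono Set.subset_union_left).trans ?_
    refine Linked.trans ?_ ((inner t _ _ hz (hr₀ t)).mono Set.subset_union_right)
    refine Linked.of_adj ?_ (Or.inl hy) (Or.inr hz)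
    rw [SimpleGraph.deleteEdges_adj]
    refine ⟨hyz, ?_⟩
    simp only [Set.mem_singleton_iff, Sym2.eq_iff]
    rintro (⟨rfl, rfl⟩ | ⟨rfl, rfl⟩)
    · exact hne' (Or.inl ⟨hmem _ _ _ hy ha, hmem _ _ _ hz hb⟩)
    · exact hne' (Or.inr ⟨hmem _ _ _ hy hb, hmem _ _ _ hz ha⟩)
  · right
    -- branch sets of the contraction
    let B' : W → Set V := fun w => if w = u then (B u ∪ B v) \ {b} else
      if w = v then {b} else B w
    let r : W → V := fun w => if w = u then a else if w = v then b else r₀ w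
    have hab' : a ≠ b := hab.ne
    have linkH : ∀ s t, G.Adj s t → ∀ y ∈ B s, ∀ z ∈ B t, Linked H (B s ∪ B t) y z := by
      intro s t hst y hy z hz
      obtain ⟨y', hy', z', hz', hyz⟩ := he hst
      refine ((Linked.of_connected (hc s) hy hy').mono Set.subset_union_left).trans ?_
      refine (Linked.of_adj hyz (Or.inl hy') (Or.inr hz')).trans ?_
      exact (Linked.of_connected (hc t) hz' hz).mono Set.subset_union_right
    let σ : V → V := fun y => if y = b then a else y
    have σadj : ∀ y z, H.Adj y z → σ y = σ z ∨ (contractEdge H a b).Adj (σ y) (σ z) := by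
      intro y z hyz
      rw [contractEdge_adj]
      have := hyz.ne
      have := hyz.symm
      simp only [σ]
      split_ifs <;> grind
    have main : ∀ w, w ≠ v → (contractEdge G u v).Adj u w →
        Linked (contractEdge H a b) (B' u ∪ B' w) (r u) (r w) := by
      intro w hwv huw
      have hwu : w ≠ u := huw.ne.symm
      have hrw : r w = r₀ w := by simp [r, hwu, hwv]
      have hbw : ∀ y ∈ B w, y ≠ b := fun y hy hyb => hwv (hmem _ _ _ hy (hyb ▸ hb))
      have l1 : Linked H (B u ∪ B v ∪ B w) a (r₀ w) := by
        rw [contractEdge_adj] at huw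
        rcases huw.2.2.2 with h2 | h2 | h2
        · exact (linkH _ _ h2 a ha _ (hr₀ w)).mono (by
            intro y; simp only [Set.mem_union]; tauto)
        · refine ((Linked.of_adj hab (S := B u ∪ B v ∪ B w) (Or.inl (Or.inl ha))
            (Or.inl (Or.inr hb)))).trans ?_
          exact (linkH _ _ h2.2 b hb _ (hr₀ w)).mono (by
            intro y; simp only [Set.mem_union]; tauto)
        · exact absurd h2.1 hwu
      have l2 := l1.map (H := contractEdge H a b) (T := B' u ∪ B' w) σ ?_
        (fun y z _ _ h => σadj y z h)
      · have e1 : σ a = r u := by simp [σ, r]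
        have e2 : σ (r₀ w) = r w := by simp [σ, hrw, hbw _ (hr₀ w)]
        rwa [e1, e2] at l2
      · intro y hy
        by_cases hyb : y = b
        · left
          simp [σ, hyb, B', ha, hab']
        · have : σ y = y := by simp [σ, hyb]
          rw [this]
          rcases hy with hy | hy
          · left; simp only [B', if_pos]; exact ⟨hy, hyb⟩
          · right; simp only [B', if_neg hwu, if_neg hwv]; exact hy
    refine h1.of_linked B' r ?_ ?_ ?_
    · intro w
      simp only [B', r]
      split_ifs
      · exact ⟨Or.inl ha, hab'⟩
      · rfl
      · exact hr₀ w
    · intro w₁ w₂ hw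
      rw [Set.disjoint_left]
      intro y h1 h2
      simp only [B'] at h1 h2
      split_ifs at h1 h2 with c1 c2 c3 c4 c5 c6 c7
      · exact hw (c1.trans c2.symm)
      · exact h1.2 h2
      · rcases h1.1 with h1 | h1
        · exact hw (c1.trans (hmem _ _ _ h1 h2))
        · exact c3 (hmem _ _ _ h2 h1)
      all_goals exact hw (by grind)
    · intro s t hst
      have hst' := (contractEdge_adj _ _ _ _ _).1 hst
      by_cases hs : s = u
      · subst hs; exact main t hst'.2.2.1 hst
      by_cases ht : t = u
      · subst ht
        have := main s hst'.2.1 hst.symm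
        rw [Set.union_comm]
        exact this.symm
      · have hG : G.Adj s t := by tauto
        have e1 : B' s = B s := by simp [B', hs, hst'.2.1]
        have e2 : B' t = B t := by simp [B', ht, hst'.2.2.1]
        have e3 : r s = r₀ s := by simp [r, hs, hst'.2.1]
        have e4 : r t = r₀ t := by simp [r, ht, hst'.2.2.1]
        rw [e1, e2, e3, e4]
        refine (linkH _ _ hG _ (hr₀ s) _ (hr₀ t)).map id (fun _ h => h) ?_
        intro y z hy hz hyz
        right
        rw [contractEdge_adj]
        refine ⟨hyz.ne, ?_, ?_, Or.inl hyz⟩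
        · rintro rfl
          rcases hy with hy | hy
          · exact hst'.2.1 (hmem _ _ _ hy hb)
          · exact hst'.2.2.1 (hmem _ _ _ hy hb)
        · rintro rfl
          rcases hz with hz | hz
          · exact hst'.2.1 (hmem _ _ _ hz hb)
          · exact hst'.2.2.1 (hmem _ _ _ hz hb)

/-! ### Book embeddings with two pages -/

set_option linter.unusedSimpArgs false in
theorem VK.of_twoPage {V : Type*} {G : SimpleGraph V} (f : V → ℕ) (hf : Function.Injective f)
    (pg : ℕ → ℕ → Prop)
    (h : ∀ a b c d, G.Adj a b → G.Adj c d → f a < f c → f c < f b → f b < f d →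
      ¬ (pg (f a) (f b) ↔ pg (f c) (f d))) : VK G := by
  classical
  let L : V → V → ZMod 2 := fun a b => if f a < f b then 1 else 0
  let x : V → V → V → ZMod 2 := fun c a b =>
    if (pg (f a) (f b) ∧ f a < f c ∧ f c < f b) ∨ (pg (f b) (f a) ∧ f b < f c ∧ f c < f a)
    then 1 else 0
  have xsymm : ∀ c a b, x c a b = x c b a := fun c a b => by
    simp only [x]; congr 1; rw [or_comm]
  have hL : ∀ a b, a ≠ b → L a b + L b a = 1 := by
    intro a b hab
    have := hf.ne hab
    simp only [L]
    rcases lt_or_gt_of_ne this with h1 | h1 <;> simp [h1, h1.not_gt]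
  refine ⟨L, x, hL, ?_⟩
  -- ordered version
  have base : ∀ a b c d, G.Adj a b → G.Adj c d → f a < f b → f c < f d → f a < f c → b ≠ c →
      b ≠ d → x c a b + x d a b + x a c d + x b c d = L a c + L a d + L b c + L b d := by
    intro a b c d hab hcd h1 h2 h3 hbc hbd
    have hbc := hf.ne hbc
    have hbd := hf.ne hbd
    have n1 : ¬ f b < f a := by omega
    have n2 : ¬ f d < f c := by omega
    have n3 : ¬ f c < f a := by omega
    have n4 : ¬ f d < f a := by omega
    have n5 : f a < f d := by omega
    have hp := h a b c d hab hcd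
    simp only [x, L]
    rcases lt_or_gt_of_ne hbc with hbc | hbc
    · have m1 : f b < f d := by omega
      simp [h1, h2, h3, n1, n2, n3, n4, n5, hbc, hbc.not_gt, m1, m1.not_gt, zmod_two_double]
    · rcases lt_or_gt_of_ne hbd with hbd | hbd
      · have hp' := hp h3 hbc hbd
        by_cases q : pg (f a) (f b) <;> by_cases q' : pg (f c) (f d) <;>
        simp [h1, h2, h3, n1, n2, n3, n4, n5, hbc, hbc.not_gt, hbd, hbd.not_gt, q, q'] at hp' ⊢ <;>
        decide
      · by_cases q : pg (f a) (f b) <;>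
        simp [h1, h2, h3, n1, n2, n3, n4, n5, hbc, hbc.not_gt, hbd, hbd.not_gt, q,
          zmod_two_double]
  have base2 : ∀ a b c d, G.Adj a b → G.Adj c d → f a < f b → f c < f d → a ≠ c → a ≠ d → b ≠ c →
      b ≠ d → x c a b + x d a b + x a c d + x b c d = L a c + L a d + L b c + L b d := by
    intro a b c d hab hcd h1 h2 h3 h4 h5 h6
    rcases lt_or_gt_of_ne (hf.ne h3) with h7 | h7
    · exact base a b c d hab hcd h1 h2 h7 h5 h6
    · have := base c d a b hcd hab h2 h1 h7 h4.symm h6.symm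
      have h40 : (4 : ZMod 2) = 0 := by decide
      have k1 := hL _ _ h3
      have k2 := hL _ _ h4
      have k3 := hL _ _ h5
      have k4 := hL _ _ h6
      linear_combination this + k1 + k2 + k3 + k4 - zmod_two_double (L a c + L a d + L b c + L b d)
        + h40
  intro a b c d hab hcd h3 h4 h5 h6
  rcases lt_or_gt_of_ne (hf.ne hab.ne) with h1 | h1 <;>
  rcases lt_or_gt_of_ne (hf.ne hcd.ne) with h2 | h2
  · exact base2 a b c d hab hcd h1 h2 h3 h4 h5 h6
  · have := base2 a b d c hab hcd.symm h1 h2 h4 h3 h6 h5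
    rw [xsymm a c d, xsymm b c d]
    linear_combination this
  · have := base2 b a c d hab.symm hcd h1 h2 h5 h6 h3 h4
    rw [xsymm c a b, xsymm d a b]
    linear_combination this
  · have := base2 b a d c hab.symm hcd.symm h1 h2 h6 h5 h4 h3
    rw [xsymm c a b, xsymm d a b, xsymm a c d, xsymm b c d]
    linear_combination this

/-- Subgraphs of the join of an edge `s t` with a path. -/
theorem VK.of_path_join {V : Type*} {G : SimpleGraph V} (s t : V) (hst : s ≠ t) (c : V → ℕ)
    (hc : ∀ a b, a ≠ s → a ≠ t → b ≠ s → b ≠ t → c a = c b → a = b)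
    (N : ℕ) (hN : ∀ v, c v < N)
    (h : ∀ a b, G.Adj a b → a ≠ s → a ≠ t → b ≠ s → b ≠ t → c a < c b →
      ∀ w, w ≠ s → w ≠ t → ¬ (c a < c w ∧ c w < c b)) : VK G := by
  classical
  let f : V → ℕ := fun v => if v = s then 0 else if v = t then N + 1 else c v + 1
  have fs : f s = 0 := by simp [f]
  have ft : f t = N + 1 := by simp [f, Ne.symm hst]
  have fo : ∀ v, v ≠ s → v ≠ t → f v = c v + 1 := fun v h1 h2 => by simp [f, h1, h2]
  refine VK.of_twoPage f ?_ (fun a _ => a = 0) ?_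
  · intro a b hab
    by_cases a1 : a = s <;> by_cases b1 : b = s <;> by_cases a2 : a = t <;> by_cases b2 : b = t <;>
      have := hN a <;> have := hN b <;> grind
  · intro a b c' d hab hcd h1 h2 h3
    have hd : f d ≤ N + 1 := by have := hN d; simp only [f]; split_ifs <;> omega
    have hcs : c' ≠ s := by rintro rfl; omega
    have hbs : b ≠ s := by rintro rfl; omega
    have hct : c' ≠ t := by rintro rfl; omega
    have hbt : b ≠ t := by rintro rfl; omega
    by_cases has : a = s
    · subst has
      rw [fs]
      simp only [true_iff]
      omega
    · have hat : a ≠ t := by rintro rfl; omega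
      exfalso
      rw [fo a has hat, fo c' hcs hct] at h1
      rw [fo c' hcs hct, fo b hbs hbt] at h2
      exact h a b hab has hat hbs hbt (by omega) c' hcs hct (by omega)

/-! ### Adding vertices of degree two over an edge -/

theorem VK.add_vertex {V : Type*} {G H : SimpleGraph V} (hH : VK H) (v a b : V)
    (hle : ∀ y z, G.Adj y z → y ≠ v → z ≠ v → H.Adj y z)
    (hab : G.Adj a b) (hav : a ≠ v) (hbv : b ≠ v)
    (hv : ∀ w, G.Adj v w → w = a ∨ w = b) : VK G := by
  classical
  obtain ⟨L, x, hL, hx⟩ := hH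
  have hab' : a ≠ b := hab.ne
  have habH := hle a b hab hav hbv
  let L' : V → V → ZMod 2 := fun y z =>
    if y = v then (if z = a then 0 else L a z) else
    if z = v then (if y = a then 1 else L y a) else L y z
  let x' : V → V → V → ZMod 2 := fun w y z =>
    if y = v then (if z = b ∧ w ≠ a then x w a b else 0) else
    if z = v then (if y = b ∧ w ≠ a then x w a b else 0) else
    if w = v then
      (if y = a then x z a b + x b a z + (L a z + L b a + L b z) else
       if z = a then x y a b + x b y a + (L a y + L b a + L b y) else x a y z)
    else x w y z
  have hL' : ∀ y z, y ≠ z → L' y z + L' z y = 1 := by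
    intro y z hyz
    simp only [L']
    have h1 := hL y z hyz
    by_cases hy : y = v
    · have hz : z ≠ v := fun h => hyz (hy.trans h.symm)
      by_cases hza : z = a
      · simp [hy, hza, hav]
      · simp only [if_pos hy, if_neg hza, if_neg hz]
        exact hL a z (Ne.symm hza)
    · by_cases hz : z = v
      · by_cases hya : y = a
        · simp [hz, hya, hav]
        · simp only [if_pos hz, if_neg hya, if_neg hy]
          exact hL y a hya
      · simp only [if_neg hz, if_neg hy]
        exact h1
  have L0 : L' v a = 0 := by simp [L']
  have Lv : ∀ z, z ≠ a → L' v z = L a z := fun z h => by simp [L', h]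
  have Ln : ∀ y z, y ≠ v → z ≠ v → L' y z = L y z := fun y z h1 h2 => by simp [L', h1, h2]
  have F : ∀ o w u, G.Adj v o → G.Adj w u → w ≠ v → u ≠ v → w ≠ o → u ≠ o →
      x' w v o + x' u v o + x' v w u + x' o w u = L' v w + L' v u + L' o w + L' o u := by
    intro o w u hvo hwu hw hu hwo huo
    have hwu' := hwu.ne
    rcases hv o hvo with rfl | rfl
    · rw [Lv w hwo, Lv u huo, Ln o w hav hw, Ln o u hav hu]
      simp only [x', if_pos, if_neg hw, if_neg hu, if_neg hwo, if_neg huo,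
        if_neg hav, hab', false_and, if_false]
      linear_combination zmod_two_double (x o w u) - zmod_two_double (L o w)
        - zmod_two_double (L o u)
    · by_cases hwa : w = a
      · subst hwa
        rw [L0, Lv u hwu'.symm, Ln o w hbv hw, Ln o u hbv hu]
        simp [x', hw, hu, hbv, hwu'.symm]
        linear_combination zmod_two_double (x u w o + x o w u)
      · by_cases hua : u = a
        · subst hua
          rw [L0, Lv w hwa, Ln o w hbv hw, Ln o u hbv hu]
          simp [x', hw, hu, hbv, hwa]
          linear_combination zmod_two_double (x w u o + x o w u)
        · rw [Lv w hwa, Lv u hua, Ln o w hbv hw, Ln o u hbv hu]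
          simp only [x', if_pos, if_neg hw, if_neg hu, if_neg hbv,
            hwa, hua, ne_eq, not_false_iff, and_self]
          exact hx a o w u habH (hle w u hwu hw hu) (Ne.symm hwa) (Ne.symm hua)
            (Ne.symm hwo) (Ne.symm huo)
  have xs1 : ∀ w o, o ≠ v → x' w o v = x' w v o := fun w o h => by simp [x', h]
  have F2 : ∀ y z w u, G.Adj y z → G.Adj w u → w ≠ v → u ≠ v → y ≠ w → y ≠ u → z ≠ w → z ≠ u →
      x' w y z + x' u y z + x' y w u + x' z w u = L' y w + L' y u + L' z w + L' z u := by
    intro y z w u hyz hwu hw hu h1 h2 h3 h4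
    by_cases hy : y = v
    · subst hy
      exact F z w u hyz hwu hw hu h3.symm h4.symm
    · by_cases hz : z = v
      · subst hz
        have := F y w u hyz.symm hwu hw hu h1.symm h2.symm
        rw [xs1 _ _ hy, xs1 _ _ hy]
        linear_combination this
      · rw [Ln _ _ hy hw, Ln _ _ hy hu, Ln _ _ hz hw, Ln _ _ hz hu]
        simp only [x', if_neg hy, if_neg hz, if_neg hw, if_neg hu]
        exact hx y z w u (hle _ _ hyz hy hz) (hle _ _ hwu hw hu) h1 h2 h3 h4
  refine ⟨L', x', hL', ?_⟩
  intro y z w u hyz hwu h1 h2 h3 h4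
  by_cases hwv : w ≠ v ∧ u ≠ v
  · exact F2 y z w u hyz hwu hwv.1 hwv.2 h1 h2 h3 h4
  · have hyv : y ≠ v := by
      rintro rfl; exact hwv ⟨h1.symm, h2.symm⟩
    have hzv : z ≠ v := by
      rintro rfl; exact hwv ⟨h3.symm, h4.symm⟩
    have := F2 w u y z hwu hyz hyv hzv h1.symm h3.symm h2.symm h4.symm
    have h40 : (4 : ZMod 2) = 0 := by decide
    have k1 := hL' _ _ h1
    have k2 := hL' _ _ h2
    have k3 := hL' _ _ h3
    have k4 := hL' _ _ h4
    linear_combination this + k1 + k2 + k3 + k4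
      - zmod_two_double (L' y w + L' y u + L' z w + L' z u) + h40

/-- Successively adding vertices of degree two over edges. -/
theorem VK.of_elimination {V : Type*} (S : Finset V) (r : V → ℕ) :
    ∀ {G H : SimpleGraph V}, VK H →
    (∀ y z, G.Adj y z → y ∉ S → z ∉ S → H.Adj y z) →
    (∀ v ∈ S, ∃ a b, G.Adj a b ∧ a ≠ v ∧ b ≠ v ∧ (a ∈ S → r v < r a) ∧ (b ∈ S → r v < r b) ∧
      ∀ w, G.Adj v w → w = a ∨ w = b ∨ (w ∈ S ∧ r w < r v)) → VK G := by
  classical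
  induction hn : S.card generalizing S with
  | zero =>
    intro G H hH hle _
    rw [Finset.card_eq_zero] at hn
    subst hn
    exact hH.mono (fun y z h => hle y z h (by simp) (by simp))
  | succ n ih =>
    intro G H hH hle hS
    obtain ⟨v, hvS, hmin⟩ := S.exists_min_image r (Finset.card_pos.1 (by omega))
    obtain ⟨a, b, hab, hav, hbv, -, -, hw⟩ := hS v hvS
    let G' : SimpleGraph V :=
      { Adj := fun y z => G.Adj y z ∧ y ≠ v ∧ z ≠ v
        symm := ⟨fun y z h => ⟨h.1.symm, h.2.2, h.2.1⟩⟩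
        loopless := ⟨fun y h => G.loopless.irrefl y h.1⟩ }
    have h1 : VK G' := by
      refine ih (S.erase v) (by rw [Finset.card_erase_of_mem hvS]; omega) hH ?_ ?_
      · intro y z hyz hy hz
        refine hle y z hyz.1 ?_ ?_
        · intro h; exact hy (Finset.mem_erase.2 ⟨hyz.2.1, h⟩)
        · intro h; exact hz (Finset.mem_erase.2 ⟨hyz.2.2, h⟩)
      · intro u hu
        rw [Finset.mem_erase] at hu
        obtain ⟨a, b, hab, hau, hbu, ha, hb, hw⟩ := hS u hu.2
        have hm := hmin u hu.2
        refine ⟨a, b, ⟨hab, ?_, ?_⟩, hau, hbu, ?_, ?_, ?_⟩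
        · rintro rfl; have := ha hvS; omega
        · rintro rfl; have := hb hvS; omega
        · intro h; exact ha (Finset.mem_of_mem_erase h)
        · intro h; exact hb (Finset.mem_of_mem_erase h)
        · intro w hwu
          rcases hw w hwu.1 with h | h | h
          · exact Or.inl h
          · exact Or.inr (Or.inl h)
          · exact Or.inr (Or.inr ⟨Finset.mem_erase.2 ⟨hwu.2.2, h.1⟩, h.2⟩)
    refine h1.add_vertex v a b (fun y z h hy hz => ⟨h, hy, hz⟩) hab hav hbv ?_
    intro w hvw
    rcases hw w hvw with h | h | h
    · exact Or.inl h
    · exact Or.inr h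
    · have := hmin w h.1; omega

/-! ### General tools -/

theorem isMinor_of_col {V W : Type*} {G : SimpleGraph V} {H : SimpleGraph W} (col : V → W)
    (r : W → V) (c : V → ℕ) (hr : ∀ w, col (r w) = w)
    (hc : ∀ v, v = r (col v) ∨ ∃ w, col w = col v ∧ c w < c v ∧ G.Adj v w)
    (hadj : ∀ w₁ w₂, H.Adj w₁ w₂ → ∃ v₁ v₂, col v₁ = w₁ ∧ col v₂ = w₂ ∧ G.Adj v₁ v₂) :
    IsMinor H G := by
  refine ⟨fun w => {v | col v = w}, fun w => ⟨r w, hr w⟩, fun w => ?_, ?_, ?_⟩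
  · refine Linked.connected (r := r w) (hr w) ?_
    have key : ∀ n v, c v = n → col v = w → Linked G {v | col v = w} v (r w) := by
      intro n
      induction n using Nat.strong_induction_on with
      | _ n ih =>
        intro v hn hv
        rcases hc v with h | ⟨u, h1, h2, h3⟩
        · rw [hv] at h
          rw [← h]
          exact Linked.refl hv
        · exact (Linked.of_adj h3 hv (h1.trans hv)).trans
            (ih (c u) (by omega) u rfl (h1.trans hv))
    exact fun v hv => key _ v rfl hv
  · intro w₁ w₂ hw
    rw [Set.disjoint_left]
    intro y h1 h2
    exact hw (h1.symm.trans h2)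
  · intro w₁ w₂ h
    obtain ⟨v₁, v₂, h1, h2, h3⟩ := hadj _ _ h
    exact ⟨v₁, h1, v₂, h2, h3⟩

theorem VK.contract_swap {V : Type*} {G : SimpleGraph V} {u w : V} (hne : u ≠ w)
    (h : VK (contractEdge G u w)) : VK (contractEdge G w u) := by
  classical
  refine h.pull (Equiv.swap u w) (Equiv.swap u w).injective ?_
  intro a b hab
  rw [contractEdge_adj] at hab ⊢
  have := G.adj_comm
  simp only [Equiv.swap_apply_def]
  split_ifs <;> grind

theorem contract_le_delete {V : Type*} {G : SimpleGraph V} {h v w : V}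
    (hb : ∀ b, G.Adj v b → b ≠ h → G.Adj h b) :
    contractEdge G h v ≤ G.deleteEdges {s(v, w)} := by
  intro a b hab
  rw [contractEdge_adj] at hab
  rw [SimpleGraph.deleteEdges_adj]
  have := G.adj_comm
  refine ⟨by grind, ?_⟩
  simp only [Set.mem_singleton_iff, Sym2.eq_iff]
  grind

theorem not_planar_of_K5 {V : Type*} {G : SimpleGraph V} (h : IsMinor K5 G) : ¬ Planar G :=
  fun hp => hp.1 h

theorem not_planar_of_K33 {V : Type*} {G : SimpleGraph V} (h : IsMinor K33 G) : ¬ Planar G :=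
  fun hp => hp.2 h

theorem eq_succ_mod {m i j : ℕ} (hi : i < m) (hj : j < m) :
    j = (i + 1) % m ↔ (j = i + 1 ∨ (i + 1 = m ∧ j = 0)) := by
  rcases Nat.lt_or_ge (i + 1) m with h | h
  · rw [Nat.mod_eq_of_lt h]; omega
  · have : i + 1 = m := by omega
    rw [this, Nat.mod_self]; omega

theorem eq_add_half_mod {n i j : ℕ} (hi : i < 2 * n) (hj : j < 2 * n) :
    j = (i + n) % (2 * n) ↔ (j = i + n ∨ i = j + n) := by
  rcases Nat.lt_or_ge (i + n) (2 * n) with h | h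
  · rw [Nat.mod_eq_of_lt h]; omega
  · rw [Nat.mod_eq_sub_mod h, Nat.mod_eq_of_lt (by omega)]; omega

/-! ### Double wheels -/

theorem dw_adj_rim {n : ℕ} (hn : 3 ≤ n) (i j : Fin n) :
    (doubleWheel n).Adj (.inl i) (.inl j) ↔ (j.val = i.val + 1 ∨ i.val = j.val + 1 ∨
      (i.val = 0 ∧ j.val + 1 = n) ∨ (j.val = 0 ∧ i.val + 1 = n)) := by
  have hi := i.2
  have hj := j.2
  simp only [doubleWheel, SimpleGraph.fromRel_adj, eq_succ_mod hi hj, eq_succ_mod hj hi, ne_eq,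
    Sum.inl.injEq, Fin.ext_iff]
  omega

theorem dw_adj_spoke {n : ℕ} (i : Fin n) (k : Fin 2) :
    (doubleWheel n).Adj (.inr k) (.inl i) := by
  simp [doubleWheel]

theorem dw_adj_spoke' {n : ℕ} (i : Fin n) (k : Fin 2) :
    (doubleWheel n).Adj (.inl i) (.inr k) := by
  simp [doubleWheel]

theorem dw_adj_hub {n : ℕ} (k l : Fin 2) :
    (doubleWheel n).Adj (.inr k) (.inr l) ↔ k ≠ l := by
  simp [doubleWheel]

theorem dw_nonplanar {n : ℕ} (hn : 3 ≤ n) : ¬ Planar (doubleWheel n) := by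
  apply not_planar_of_K5
  let col : Fin n ⊕ Fin 2 → Fin 5 := fun v => match v with
    | .inl i => if i.val = 0 then 2 else if i.val = 1 then 3 else 4
    | .inr k => if k = 0 then 0 else 1
  let r : Fin 5 → Fin n ⊕ Fin 2 :=
    ![.inr 0, .inr 1, .inl ⟨0, by omega⟩, .inl ⟨1, by omega⟩, .inl ⟨2, by omega⟩]
  let c : Fin n ⊕ Fin 2 → ℕ := fun v => match v with
    | .inl i => i.val
    | .inr _ => 0
  have hr : ∀ w, col (r w) = w := by
    intro w; fin_cases w <;> simp [col, r]
  refine isMinor_of_col col r c hr ?_ ?_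
  · rintro (i | k)
    · by_cases h0 : i.val = 0
      · left
        obtain rfl : i = ⟨0, Nat.lt_of_lt_of_le (by decide) hn⟩ := Fin.ext h0
        rfl
      by_cases h1 : i.val = 1
      · left
        obtain rfl : i = ⟨1, Nat.lt_of_lt_of_le (by decide) hn⟩ := Fin.ext h1
        rfl
      by_cases h2 : i.val = 2
      · left
        obtain rfl : i = ⟨2, Nat.lt_of_lt_of_le (by decide) hn⟩ := Fin.ext h2
        rfl
      · right
        refine ⟨.inl ⟨i.val - 1, by omega⟩, ?_, ?_, ?_⟩
        · have e1 : i.val - 1 ≠ 0 := by omega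
          have e2 : i.val - 1 ≠ 1 := by omega
          simp only [col, if_neg h0, if_neg h1, if_neg e1, if_neg e2]
        · simp only [c]; omega
        · rw [dw_adj_rim hn]; simp only; omega
    · left; fin_cases k <;> simp [col, r]
  · have key : ∀ w₁ w₂ : Fin 5, w₁ < w₂ →
        ∃ v₁ v₂, col v₁ = w₁ ∧ col v₂ = w₂ ∧ (doubleWheel n).Adj v₁ v₂ := by
      intro w₁ w₂ h
      by_cases hs : w₁ = 2 ∧ w₂ = 4
      · refine ⟨r 2, .inl ⟨n - 1, by omega⟩, (hr 2).trans hs.1.symm, ?_, ?_⟩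
        · have e1 : n - 1 ≠ 0 := by omega
          have e2 : n - 1 ≠ 1 := by omega
          simp only [col, if_neg e1, if_neg e2, hs.2]
        · simp only [r]
          change (doubleWheel n).Adj (.inl ⟨0, _⟩) _
          rw [dw_adj_rim hn]
          refine Or.inr (Or.inr (Or.inl ⟨rfl, ?_⟩))
          change n - 1 + 1 = n
          omega
      · refine ⟨r w₁, r w₂, hr _, hr _, ?_⟩
        fin_cases w₁ <;> fin_cases w₂ <;>
          simp [r, dw_adj_spoke, dw_adj_hub, dw_adj_rim hn] at hs h ⊢
    intro w₁ w₂ h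
    rcases lt_or_gt_of_ne h.ne with h1 | h1
    · exact key _ _ h1
    · obtain ⟨a, b, h2, h3, h4⟩ := key _ _ h1
      exact ⟨b, a, h3, h2, h4.symm⟩

theorem dw_delete_rim {n : ℕ} (hn : 3 ≤ n) (i j : Fin n)
    (hij : j.val = i.val + 1 ∨ (j.val = 0 ∧ i.val + 1 = n)) :
    VK ((doubleWheel n).deleteEdges {s(.inl i, .inl j)}) := by
  have hi := i.2
  have hj := j.2
  let rot : ℕ → ℕ := fun k => if j.val ≤ k then k - j.val else k + n - j.val
  let c : Fin n ⊕ Fin 2 → ℕ := fun v => match v with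
    | .inl k => rot k.val
    | .inr _ => 0
  have hub : ∀ m : Fin 2, (Sum.inr m : Fin n ⊕ Fin 2) ≠ .inr 0 →
      (Sum.inr m : Fin n ⊕ Fin 2) ≠ .inr 1 → False := by
    intro m h1 h2
    fin_cases m
    · exact h1 rfl
    · exact h2 rfl
  refine VK.of_path_join (.inr 0) (.inr 1) (by simp) c ?_ n ?_ ?_
  · rintro (a | a) (b | b)
    · intro _ _ _ _ h
      have := a.2
      have := b.2
      simp only [c, rot] at h
      congr 1
      apply Fin.ext
      split_ifs at h <;> omega
    all_goals intro h1 h2 h3 h4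
    · exact (hub _ h3 h4).elim
    · exact (hub _ h1 h2).elim
    · exact (hub _ h1 h2).elim
  · rintro (a | a)
    · have := a.2
      simp only [c, rot]
      split_ifs <;> omega
    · simp only [c]; omega
  · rintro (a | a) (b | b)
    · intro hab _ _ _ _ hlt
      rw [SimpleGraph.deleteEdges_adj, dw_adj_rim hn] at hab
      simp only [Set.mem_singleton_iff, Sym2.eq_iff, Sum.inl.injEq, Fin.ext_iff] at hab
      have := a.2
      have := b.2
      rintro (w | w)
      · intro _ _
        have := w.2
        simp only [c, rot] at hlt ⊢
        split_ifs at hlt ⊢ <;> omega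
      · simp only [c]; omega
    all_goals intro _ h1 h2 h3 h4
    · exact (hub _ h3 h4).elim
    · exact (hub _ h1 h2).elim
    · exact (hub _ h1 h2).elim

theorem dw_contract_hub {n : ℕ} (hn : 3 ≤ n) (k l : Fin 2) (hkl : k ≠ l) :
    VK (contractEdge (doubleWheel n) (.inr k) (.inr l)) := by
  let c : Fin n ⊕ Fin 2 → ℕ := fun v => match v with
    | .inl k => k.val
    | .inr _ => n
  have hk : ∀ m : Fin 2, (Sum.inr m : Fin n ⊕ Fin 2) ≠ .inr k → m = l := by
    intro m hm
    have : m ≠ k := fun h => hm (by rw [h])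
    omega
  refine VK.of_path_join (.inr k) (.inl ⟨0, by omega⟩) (by simp) c ?_ (n + 1) ?_ ?_
  · rintro (a | a) (b | b) h1 h2 h3 h4 h
    · simp only [c] at h
      rw [Fin.ext h]
    · have := a.2; simp only [c] at h; omega
    · have := b.2; simp only [c] at h; omega
    · rw [hk a h1, hk b h3]
  · rintro (a | a)
    · have := a.2
      simp only [c]; omega
    · simp only [c]; omega
  · rintro (a | a) (b | b) hab h1 h2 h3 h4 hlt
    · rw [contractEdge_adj, dw_adj_rim hn] at hab
      simp only [ne_eq, Sum.inl.injEq, Fin.ext_iff] at hab h2 h4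
      have := a.2
      have := b.2
      rintro (w | w) h5 h6
      · simp only [c] at hlt ⊢
        have : a.val + 1 = b.val := by
          rcases hab.2.2.2 with h | h | h
          · omega
          · exact absurd h.1 (by simp)
          · exact absurd h.1 (by simp)
        omega
      · simp only [c]; omega
    · rw [contractEdge_adj, hk b h3] at hab
      exact absurd rfl hab.2.2.1
    · rw [contractEdge_adj, hk a h1] at hab
      exact absurd rfl hab.2.1
    · simp only [c] at hlt; omega

theorem dw_contract_spoke {n : ℕ} (hn : 3 ≤ n) (k : Fin 2) (i : Fin n) :
    VK (contractEdge (doubleWheel n) (.inr k) (.inl i)) := by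
  have hi := i.2
  have : ∃ j : Fin n, j.val = i.val + 1 ∨ (j.val = 0 ∧ i.val + 1 = n) := by
    by_cases h : i.val + 1 = n
    · exact ⟨⟨0, by omega⟩, Or.inr ⟨rfl, h⟩⟩
    · exact ⟨⟨i.val + 1, by omega⟩, Or.inl rfl⟩
  obtain ⟨j, hj⟩ := this
  refine (dw_delete_rim hn i j hj).mono (contract_le_delete ?_)
  rintro (b | b) _ hb
  · exact dw_adj_spoke _ _
  · rw [dw_adj_hub]
    rintro rfl
    exact hb rfl

theorem dw_almostVK {n : ℕ} (hn : 3 ≤ n) : AlmostVK (doubleWheel n) := by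
  rintro (i | k) (j | l) h
  · left
    rw [dw_adj_rim hn] at h
    by_cases h1 : j.val = i.val + 1 ∨ (j.val = 0 ∧ i.val + 1 = n)
    · exact dw_delete_rim hn i j h1
    · rw [Sym2.eq_swap]
      exact dw_delete_rim hn j i (by omega)
  · right
    exact (dw_contract_spoke hn l i).contract_swap (by simp)
  · right
    exact dw_contract_spoke hn k j
  · right
    exact dw_contract_hub hn k l ((dw_adj_hub k l).1 h)

/-! ### Möbius ladders -/

theorem ml_adj {n : ℕ} (hn : 3 ≤ n) (i j : Fin (2 * n)) :
    (mobiusLadder n).Adj i j ↔ (j.val = i.val + 1 ∨ i.val = j.val + 1 ∨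
      (i.val = 0 ∧ j.val + 1 = 2 * n) ∨ (j.val = 0 ∧ i.val + 1 = 2 * n) ∨
      j.val = i.val + n ∨ i.val = j.val + n) := by
  have hi := i.2
  have hj := j.2
  simp only [mobiusLadder, SimpleGraph.fromRel_adj, eq_succ_mod hi hj, eq_succ_mod hj hi, ne_eq,
    Fin.ext_iff, eq_add_half_mod hi hj, eq_add_half_mod hj hi]
  omega

theorem ml_nonplanar {n : ℕ} (hn : 3 ≤ n) : ¬ Planar (mobiusLadder n) := by
  apply not_planar_of_K33
  let col : Fin (2 * n) → Fin 3 ⊕ Fin 3 := fun v =>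
    if v.val = 0 then .inl 0 else if v.val = 1 then .inr 0 else if v.val < n then .inl 1 else
    if v.val = n then .inr 1 else if v.val = n + 1 then .inl 2 else .inr 2
  let r : Fin 3 ⊕ Fin 3 → Fin (2 * n) := fun w => match w with
    | .inl k => ![⟨0, by omega⟩, ⟨2, by omega⟩, ⟨n + 1, by omega⟩] k
    | .inr k => ![⟨1, by omega⟩, ⟨n, by omega⟩, ⟨n + 2, by omega⟩] k
  have c0 : ∀ v : Fin (2 * n), v.val = 0 → col v = .inl 0 := fun v h => by simp [col, h]
  have c1 : ∀ v : Fin (2 * n), v.val = 1 → col v = .inr 0 := fun v h => by simp [col, h]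
  have c2 : ∀ v : Fin (2 * n), 2 ≤ v.val → v.val < n → col v = .inl 1 := fun v h h' => by
    have e1 : v.val ≠ 0 := by omega
    have e2 : v.val ≠ 1 := by omega
    simp only [col, if_neg e1, if_neg e2, if_pos h']
  have c3 : ∀ v : Fin (2 * n), v.val = n → col v = .inr 1 := fun v h => by
    have e1 : v.val ≠ 0 := by omega
    have e2 : v.val ≠ 1 := by omega
    have e3 : ¬ v.val < n := by omega
    simp only [col, if_neg e1, if_neg e2, if_neg e3, if_pos h]
  have c4 : ∀ v : Fin (2 * n), v.val = n + 1 → col v = .inl 2 := fun v h => by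
    have e1 : v.val ≠ 0 := by omega
    have e2 : v.val ≠ 1 := by omega
    have e3 : ¬ v.val < n := by omega
    have e4 : v.val ≠ n := by omega
    simp only [col, if_neg e1, if_neg e2, if_neg e3, if_neg e4, if_pos h]
  have c5 : ∀ v : Fin (2 * n), n + 2 ≤ v.val → col v = .inr 2 := fun v h => by
    have e1 : v.val ≠ 0 := by omega
    have e2 : v.val ≠ 1 := by omega
    have e3 : ¬ v.val < n := by omega
    have e4 : v.val ≠ n := by omega
    have e5 : v.val ≠ n + 1 := by omega
    simp only [col, if_neg e1, if_neg e2, if_neg e3, if_neg e4, if_neg e5]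
  refine isMinor_of_col col r (fun v => v.val) ?_ ?_ ?_
  · rintro (w | w) <;> fin_cases w
    · exact c0 _ rfl
    · exact c2 _ (le_refl _) (show 2 < n by omega)
    · exact c4 _ rfl
    · exact c1 _ rfl
    · exact c3 _ rfl
    · exact c5 _ (le_refl _)
  · intro v
    have hv := v.2
    by_cases e0 : v.val = 0
    · left; rw [c0 v e0]; exact Fin.ext e0
    by_cases e1 : v.val = 1
    · left; rw [c1 v e1]; exact Fin.ext e1
    by_cases e2 : v.val = 2
    · left; rw [c2 v (by omega) (by omega)]; exact Fin.ext e2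
    by_cases e3 : v.val < n
    · right
      refine ⟨⟨v.val - 1, by omega⟩, ?_, ?_, ?_⟩
      · rw [c2 v (by omega) e3]
        exact c2 _ (show 2 ≤ v.val - 1 by omega) (show v.val - 1 < n by omega)
      · show v.val - 1 < v.val; omega
      · rw [ml_adj hn]; simp only; omega
    by_cases e4 : v.val = n
    · left; rw [c3 v e4]; exact Fin.ext e4
    by_cases e5 : v.val = n + 1
    · left; rw [c4 v e5]; exact Fin.ext e5
    by_cases e6 : v.val = n + 2
    · left; rw [c5 v (by omega)]; exact Fin.ext e6
    · right
      refine ⟨⟨v.val - 1, by omega⟩, ?_, ?_, ?_⟩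
      · rw [c5 v (by omega)]
        exact c5 _ (show n + 2 ≤ v.val - 1 by omega)
      · show v.val - 1 < v.val; omega
      · rw [ml_adj hn]; simp only; omega
  · have mk : ∀ (w₁ w₂ : Fin 3 ⊕ Fin 3) (a b : ℕ) (ha : a < 2 * n) (hb : b < 2 * n),
        col ⟨a, ha⟩ = w₁ → col ⟨b, hb⟩ = w₂ → (mobiusLadder n).Adj ⟨a, ha⟩ ⟨b, hb⟩ →
        ∃ v₁ v₂, col v₁ = w₁ ∧ col v₂ = w₂ ∧ (mobiusLadder n).Adj v₁ v₂ :=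
      fun w₁ w₂ a b ha hb h1 h2 h3 => ⟨_, _, h1, h2, h3⟩
    have key : ∀ i j : Fin 3, ∃ v₁ v₂, col v₁ = .inl i ∧ col v₂ = .inr j ∧
        (mobiusLadder n).Adj v₁ v₂ := by
      intro i j
      fin_cases i <;> fin_cases j
      · exact mk _ _ 0 1 (by omega) (by omega) (c0 _ rfl) (c1 _ rfl)
          (by rw [ml_adj hn]; simp)
      · exact mk _ _ 0 n (by omega) (by omega) (c0 _ rfl) (c3 _ rfl)
          (by rw [ml_adj hn]; simp)
      · exact mk _ _ 0 (2 * n - 1) (by omega) (by omega) (c0 _ rfl)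
          (c5 _ (show n + 2 ≤ 2 * n - 1 by omega)) (by rw [ml_adj hn]; dsimp only; omega)
      · exact mk _ _ 2 1 (by omega) (by omega) (c2 _ (le_refl _) (show 2 < n by omega))
          (c1 _ rfl) (by rw [ml_adj hn]; simp)
      · exact mk _ _ (n - 1) n (by omega) (by omega)
          (c2 _ (show 2 ≤ n - 1 by omega) (show n - 1 < n by omega))
          (c3 _ rfl) (by rw [ml_adj hn]; dsimp only; omega)
      · exact mk _ _ 2 (n + 2) (by omega) (by omega) (c2 _ (le_refl _) (show 2 < n by omega))
          (c5 _ (le_refl _)) (by rw [ml_adj hn]; dsimp only; omega)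
      · exact mk _ _ (n + 1) 1 (by omega) (by omega) (c4 _ rfl) (c1 _ rfl)
          (by rw [ml_adj hn]; dsimp only; omega)
      · exact mk _ _ (n + 1) n (by omega) (by omega) (c4 _ rfl) (c3 _ rfl)
          (by rw [ml_adj hn]; simp)
      · exact mk _ _ (n + 1) (n + 2) (by omega) (by omega) (c4 _ rfl) (c5 _ (le_refl _))
          (by rw [ml_adj hn]; simp)
    rintro (w₁ | w₁) (w₂ | w₂) h
    · simp [K33] at h
    · exact key _ _
    · obtain ⟨a, b, h1, h2, h3⟩ := key w₂ w₁
      exact ⟨b, a, h2, h1, h3.symm⟩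
    · simp [K33] at h

theorem ml_delete_rim {n : ℕ} (hn : 3 ≤ n) (i j : Fin (2 * n))
    (hij : j.val = i.val + 1 ∨ (j.val = 0 ∧ i.val + 1 = 2 * n)) :
    VK ((mobiusLadder n).deleteEdges {s(i, j)}) := by
  have hi := i.2
  have hj := j.2
  let rot : Fin (2 * n) → ℕ := fun k => if j.val ≤ k.val then k.val - j.val
    else k.val + 2 * n - j.val
  let f : Fin (2 * n) → ℕ := fun k => if rot k < n then rot k else 3 * n - 1 - rot k
  have hrot : ∀ k, rot k < 2 * n := by
    intro k; have := k.2; simp only [rot]; split_ifs <;> omega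
  have edge : ∀ a b, ((mobiusLadder n).deleteEdges {s(i, j)}).Adj a b → f a < f b →
      f b < 2 * n ∧ (f b = f a + 1 ∨ f a + f b = 2 * n - 1 ∨ (f a = n - 1 ∧ f b = 2 * n - 1)) := by
    intro a b hab hlt
    rw [SimpleGraph.deleteEdges_adj, ml_adj hn] at hab
    simp only [Set.mem_singleton_iff, Sym2.eq_iff, Fin.ext_iff] at hab
    have ha := a.2
    have hb := b.2
    have step : rot b = rot a + 1 ∨ rot a = rot b + 1 ∨ rot b = rot a + n ∨ rot a = rot b + n := by
      simp only [rot]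
      split_ifs <;> omega
    have h1 := hrot a
    have h2 := hrot b
    simp only [f] at hlt ⊢
    split_ifs at hlt ⊢ <;> omega
  refine VK.of_twoPage f ?_ (fun s t => s + t = 2 * n - 1) ?_
  · intro a b hab
    have h1 := hrot a
    have h2 := hrot b
    have ha := a.2
    have hb := b.2
    have h3 : rot a = rot b := by
      simp only [f] at hab
      split_ifs at hab <;> omega
    apply Fin.ext
    simp only [rot] at h3
    split_ifs at h3 <;> omega
  · intro a b c d hab hcd h1 h2 h3
    have := edge a b hab (by omega)
    have := edge c d hcd (by omega)
    omega

theorem ml_contract_rung {n : ℕ} (hn : 3 ≤ n) (i j : Fin (2 * n))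
    (hij : j.val = i.val + n ∨ i.val = j.val + n) :
    VK (contractEdge (mobiusLadder n) i j) := by
  have hi := i.2
  have hj := j.2
  let rot : Fin (2 * n) → ℕ := fun k => if i.val ≤ k.val then k.val - i.val
    else k.val + 2 * n - i.val
  let f : Fin (2 * n) → ℕ := fun k => if rot k < n then rot k else 3 * n - 1 - rot k
  have hrot : ∀ k, rot k < 2 * n := by
    intro k; have := k.2; simp only [rot]; split_ifs <;> omega
  have roti : rot i = 0 := by simp [rot]
  have rotj : rot j = n := by simp only [rot]; split_ifs <;> omega
  have rotinj : ∀ a b, rot a = rot b → a = b := by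
    intro a b h3
    have ha := a.2
    have hb := b.2
    apply Fin.ext
    simp only [rot] at h3
    split_ifs at h3 <;> omega
  have step : ∀ a b, (mobiusLadder n).Adj a b →
      rot b = rot a + 1 ∨ rot a = rot b + 1 ∨ rot b = rot a + n ∨ rot a = rot b + n ∨
        (rot a = 0 ∧ rot b + 1 = 2 * n) ∨ (rot b = 0 ∧ rot a + 1 = 2 * n) := by
    intro a b hab
    rw [ml_adj hn] at hab
    have ha := a.2
    have hb := b.2
    simp only [rot]
    split_ifs <;> omega
  have edge : ∀ a b, (contractEdge (mobiusLadder n) i j).Adj a b → f a < f b →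
      f b < 2 * n ∧ (f b = f a + 1 ∨ f a + f b = 2 * n - 1 ∨ f a = 0) := by
    intro a b hab hlt
    rw [contractEdge_adj] at hab
    obtain ⟨h1, h2, h3, h4⟩ := hab
    have ha := hrot a
    have hb := hrot b
    have h2' : rot a ≠ n := fun h => h2 (rotinj _ _ (h.trans rotj.symm))
    have h3' : rot b ≠ n := fun h => h3 (rotinj _ _ (h.trans rotj.symm))
    rcases h4 with h4 | ⟨rfl, h4⟩ | ⟨rfl, h4⟩
    · have := step a b h4
      simp only [f] at hlt ⊢
      split_ifs at hlt ⊢ <;> omega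
    · simp only [f] at hlt ⊢
      split_ifs at hlt ⊢ <;> omega
    · exfalso
      simp only [f] at hlt
      split_ifs at hlt <;> omega
  refine VK.of_twoPage f ?_ (fun s t => s + t = 2 * n - 1) ?_
  · intro a b hab
    have h1 := hrot a
    have h2 := hrot b
    refine rotinj _ _ ?_
    simp only [f] at hab
    split_ifs at hab <;> omega
  · intro a b c d hab hcd h1 h2 h3
    have := edge a b hab (by omega)
    have := edge c d hcd (by omega)
    omega

theorem ml_almostVK {n : ℕ} (hn : 3 ≤ n) : AlmostVK (mobiusLadder n) := by
  intro i j h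
  rw [ml_adj hn] at h
  by_cases h0 : j.val = i.val + n ∨ i.val = j.val + n
  · exact Or.inr (ml_contract_rung hn i j h0)
  · left
    by_cases h1 : j.val = i.val + 1 ∨ (j.val = 0 ∧ i.val + 1 = 2 * n)
    · exact ml_delete_rim hn i j h1
    · rw [Sym2.eq_swap]
      exact ml_delete_rim hn j i (by omega)

/-! ### The class of three wheels glued along a triangle -/

/-- Part `i` of the partition `P` is a path, numbered by `c` from `1` to `m`, joined to the
triangle `h p q` such that the whole forms a wheel with hub `h`. -/
structure Fan {V : Type*} (G : SimpleGraph V) (P : V → Fin 4) (i : Fin 4) (h p q : V) (m : ℕ)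
    (c : V → ℕ) : Prop where
  hi : i ≠ 0
  hh : P h = 0
  hp : P p = 0
  hq : P q = 0
  hhp : h ≠ p
  hhq : h ≠ q
  hpq : p ≠ q
  zero : ∀ v, P v = 0 → v = h ∨ v = p ∨ v = q
  hm : 1 ≤ m
  lo : ∀ v, P v = i → 1 ≤ c v
  up : ∀ v, P v = i → c v ≤ m
  surj : ∀ k, 1 ≤ k → k ≤ m → ∃ v, P v = i ∧ c v = k
  inj : ∀ v w, P v = i → P w = i → c v = c w → v = w
  adjh : ∀ v, P v = i → G.Adj h v
  adjp : ∀ v, P v = i → (G.Adj p v ↔ c v = 1)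
  adjq : ∀ v, P v = i → (G.Adj q v ↔ c v = m)
  adj : ∀ v w, P v = i → P w = i → (G.Adj v w ↔ (c v + 1 = c w ∨ c w + 1 = c v))

theorem Fan.reverse {V : Type*} {G : SimpleGraph V} {P : V → Fin 4} {i : Fin 4} {h p q : V}
    {m : ℕ} {c : V → ℕ} (F : Fan G P i h p q m c) :
    Fan G P i h q p m (fun v => m + 1 - c v) where
  hi := F.hi
  hh := F.hh
  hp := F.hq
  hq := F.hp
  hhp := F.hhq
  hhq := F.hhp
  hpq := F.hpq.symm
  zero := fun v hv => by have := F.zero v hv; tauto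
  hm := F.hm
  lo := fun v hv => by have := F.up v hv; omega
  up := fun v hv => by have := F.lo v hv; omega
  surj := fun k h1 h2 => by
    obtain ⟨v, hv, hc⟩ := F.surj (m + 1 - k) (by omega) (by omega)
    exact ⟨v, hv, by omega⟩
  inj := fun v w hv hw e => by
    have := F.up v hv
    have := F.up w hw
    exact F.inj v w hv hw (by omega)
  adjh := F.adjh
  adjp := fun v hv => by
    have := F.up v hv
    rw [F.adjq v hv]; omega
  adjq := fun v hv => by
    have := F.up v hv
    have := F.lo v hv
    rw [F.adjp v hv]; omega
  adj := fun v w hv hw => by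
    have := F.up v hv
    have := F.up w hw
    rw [F.adj v w hv hw]; omega

theorem Fan.orient_last {V : Type*} {G : SimpleGraph V} {P : V → Fin 4} {i : Fin 4} {h p q z : V}
    {m : ℕ} {c : V → ℕ} (F : Fan G P i h p q m c) (hz : P z = 0) (hzh : z ≠ h) :
    ∃ p' c', Fan G P i h p' z m c' := by
  rcases F.zero z hz with rfl | rfl | rfl
  · exact absurd rfl hzh
  · exact ⟨_, _, F.reverse⟩
  · exact ⟨_, _, F⟩

theorem Fan.orient_first {V : Type*} {G : SimpleGraph V} {P : V → Fin 4} {i : Fin 4}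
    {h p q z : V} {m : ℕ} {c : V → ℕ} (F : Fan G P i h p q m c) (hz : P z = 0) (hzh : z ≠ h) :
    ∃ q' c', Fan G P i h z q' m c' := by
  rcases F.zero z hz with rfl | rfl | rfl
  · exact absurd rfl hzh
  · exact ⟨_, _, F⟩
  · exact ⟨_, _, F.reverse⟩

theorem Fan.exists_finset {V : Type*} {G : SimpleGraph V} {P : V → Fin 4} {i : Fin 4}
    {h p q : V} {m : ℕ} {c : V → ℕ} (F : Fan G P i h p q m c) :
    ∃ S : Finset V, ∀ v, v ∈ S ↔ P v = i := by
  have hf : {v | P v = i}.Finite := by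
    apply Set.Finite.of_finite_image (f := c)
    · apply (Set.finite_Iic m).subset
      rintro _ ⟨v, hv, rfl⟩
      exact F.up v hv
    · intro v hv w hw e
      exact F.inj v w hv hw e
  exact ⟨hf.toFinset, fun v => by simp⟩

/-- numbering of a wheel: rim positions `0, …, n - 1`, hub at `n`. -/
theorem IsWheel.numbering {V : Type*} {G : SimpleGraph V} {S : Set V}
    (hW : IsWheel (G.induce S)) : ∃ (n : ℕ) (g : V → ℕ), 3 ≤ n ∧ (∀ v ∈ S, g v ≤ n) ∧
      (∀ v ∈ S, ∀ w ∈ S, g v = g w → v = w) ∧ (∀ k, k ≤ n → ∃ v ∈ S, g v = k) ∧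
      ∀ v ∈ S, ∀ w ∈ S, (G.Adj v w ↔ g v ≠ g w ∧ (g v = n ∨ g w = n ∨ g w = g v + 1 ∨
        g v = g w + 1 ∨ (g v = 0 ∧ g w + 1 = n) ∨ (g w = 0 ∧ g v + 1 = n))) := by
  classical
  obtain ⟨n, hn, ⟨φ⟩⟩ := hW
  let num : Option (Fin n) → ℕ := fun o => match o with
    | none => n
    | some i => i.val
  have num_le : ∀ o, num o ≤ n := by
    rintro (_ | i)
    · exact le_refl _
    · exact i.2.le
  have num_inj : ∀ o o', num o = num o' → o = o' := by
    rintro (_ | i) (_ | j) e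
    · rfl
    · have : n = j.val := e
      omega
    · have : i.val = n := e
      omega
    · exact congrArg some (Fin.ext e)
  have num_surj : ∀ k, k ≤ n → ∃ o, num o = k := by
    intro k hk
    rcases Nat.lt_or_ge k n with h | h
    · exact ⟨some ⟨k, h⟩, rfl⟩
    · exact ⟨none, le_antisymm h hk⟩
  have num_adj : ∀ o o', (wheelGraph n).Adj o o' ↔ num o ≠ num o' ∧ (num o = n ∨ num o' = n ∨
      num o' = num o + 1 ∨ num o = num o' + 1 ∨ (num o = 0 ∧ num o' + 1 = n) ∨
      (num o' = 0 ∧ num o + 1 = n)) := by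
    rintro (_ | i) (_ | j)
    · simp
    · have := j.2
      simp only [wheelGraph, SimpleGraph.fromRel_adj, num]
      simp
      omega
    · have := i.2
      simp only [wheelGraph, SimpleGraph.fromRel_adj, num]
      simp
      omega
    · have hi := i.2
      have hj := j.2
      simp only [wheelGraph, SimpleGraph.fromRel_adj, num, eq_succ_mod hi hj, eq_succ_mod hj hi,
        ne_eq, Option.some.injEq, Fin.ext_iff]
      omega
  let g : V → ℕ := fun v => if hv : v ∈ S then num (φ ⟨v, hv⟩) else 0
  have hg : ∀ v (hv : v ∈ S), g v = num (φ ⟨v, hv⟩) := fun v hv => by simp [g, hv]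
  refine ⟨n, g, hn, ?_, ?_, ?_, ?_⟩
  · intro v hv
    rw [hg v hv]; exact num_le _
  · intro v hv w hw e
    rw [hg v hv, hg w hw] at e
    have := φ.injective (num_inj _ _ e)
    exact congrArg Subtype.val this
  · intro k hk
    obtain ⟨o, ho⟩ := num_surj k hk
    obtain ⟨v, rfl⟩ := φ.surjective o
    exact ⟨v.1, v.2, by rw [hg v.1 v.2, ← ho]⟩
  · intro v hv w hw
    rw [hg v hv, hg w hw, ← num_adj, φ.map_adj_iff]
    simp

theorem fan_oriented {V : Type*} {G : SimpleGraph V} {P : V → Fin 4} {i : Fin 4} (hi : i ≠ 0)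
    {x y z : V} (hx : P x = 0) (hy : P y = 0) (hz : P z = 0) (hxy : x ≠ y) (hxz : x ≠ z)
    (hyz : y ≠ z) (hzero : ∀ v, P v = 0 → v = x ∨ v = y ∨ v = z) {n : ℕ} {g : V → ℕ} (hn : 3 ≤ n)
    (gle : ∀ v, P v = 0 ∨ P v = i → g v ≤ n)
    (ginj : ∀ v, P v = 0 ∨ P v = i → ∀ w, P w = 0 ∨ P w = i → g v = g w → v = w)
    (gsurj : ∀ k, k ≤ n → ∃ v, (P v = 0 ∨ P v = i) ∧ g v = k)
    (gadj : ∀ v, P v = 0 ∨ P v = i → ∀ w, P w = 0 ∨ P w = i → (G.Adj v w ↔ g v ≠ g w ∧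
        (g v = n ∨ g w = n ∨ g w = g v + 1 ∨
        g v = g w + 1 ∨ (g v = 0 ∧ g w + 1 = n) ∨ (g w = 0 ∧ g v + 1 = n))))
    (gx : g x = n) (hor : g y = g z + 1 ∨ (g y = 0 ∧ g z + 1 = n)) :
    ∃ h p q m c, Fan G P i h p q m c := by
  let c : V → ℕ := fun v => if g y ≤ g v then g v - g y else g v + n - g y
  have hne : ∀ v w, P v = i → P w = 0 → g v ≠ g w := by
    intro v w hv hw e
    have := ginj v (Or.inr hv) w (Or.inl hw) e
    subst this
    exact hi (hv.symm.trans hw)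
  have gylt : g y < n := by
    have := gle y (Or.inl hy)
    have : g y ≠ n := fun e => hxy (ginj x (Or.inl hx) y (Or.inl hy) (gx.trans e.symm))
    omega
  have gzlt : g z < n := by omega
  have glt : ∀ v, P v = i → g v < n := by
    intro v hv
    have := gle v (Or.inr hv)
    have := hne v x hv hx
    omega
  refine ⟨x, y, z, n - 2, c, hi, hx, hy, hz, hxy, hxz, hyz, hzero, by omega, ?_, ?_, ?_, ?_, ?_,
    ?_, ?_, ?_⟩
  · intro v hv
    have := hne v y hv hy
    have := glt v hv
    simp only [c]; split_ifs <;> omega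
  · intro v hv
    have := hne v z hv hz
    have := glt v hv
    simp only [c]; split_ifs <;> omega
  · intro k h1 h2
    have : ∃ l, l < n ∧ l ≠ g y ∧ l ≠ g z ∧ (if g y ≤ l then l - g y else l + n - g y) = k := by
      by_cases hk : k + g y < n
      · refine ⟨k + g y, hk, by omega, by omega, ?_⟩
        rw [if_pos (by omega)]; omega
      · refine ⟨k + g y - n, by omega, by omega, by omega, ?_⟩
        rw [if_neg (by omega)]; omega
    obtain ⟨l, l1, l2, l3, l4⟩ := this
    obtain ⟨v, hv, rfl⟩ := gsurj l (by omega)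
    refine ⟨v, ?_, l4⟩
    rcases hv with hv | hv
    · exfalso
      rcases hzero v hv with rfl | rfl | rfl <;> omega
    · exact hv
  · intro v w hv hw e
    apply ginj v (Or.inr hv) w (Or.inr hw)
    have := glt v hv
    have := glt w hw
    simp only [c] at e
    split_ifs at e <;> omega
  · intro v hv
    rw [gadj x (Or.inl hx) v (Or.inr hv)]
    have := glt v hv
    omega
  · intro v hv
    rw [gadj y (Or.inl hy) v (Or.inr hv)]
    have := glt v hv
    have := hne v y hv hy
    have := hne v z hv hz
    simp only [c]; split_ifs <;> omega
  · intro v hv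
    rw [gadj z (Or.inl hz) v (Or.inr hv)]
    have := glt v hv
    have := hne v y hv hy
    have := hne v z hv hz
    simp only [c]; split_ifs <;> omega
  · intro v w hv hw
    rw [gadj v (Or.inr hv) w (Or.inr hw)]
    have := glt v hv
    have := hne v y hv hy
    have := hne v z hv hz
    have := glt w hw
    have := hne w y hw hy
    have := hne w z hw hz
    simp only [c]; split_ifs <;> omega

theorem exists_fan {V : Type*} {G : SimpleGraph V} {P : V → Fin 4} {i : Fin 4} (hi : i ≠ 0)
    {x y z : V} (hx : P x = 0) (hy : P y = 0) (hz : P z = 0) (hxy : x ≠ y) (hxz : x ≠ z)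
    (hyz : y ≠ z) (hzero : ∀ v, P v = 0 → v = x ∨ v = y ∨ v = z)
    (htri : ∀ x y : V, P x = 0 → P y = 0 → x ≠ y → G.Adj x y)
    (hW : IsWheel (G.induce {v | P v = 0 ∨ P v = i})) :
    ∃ h p q m c, Fan G P i h p q m c := by
  obtain ⟨n, g, hn, gle, ginj, gsurj, gadj⟩ := hW.numbering
  simp only [Set.mem_ofPred_eq] at gle ginj gsurj gadj
  have key : ∀ x y z : V, P x = 0 → P y = 0 → P z = 0 → x ≠ y → x ≠ z → y ≠ z →
      (∀ v, P v = 0 → v = x ∨ v = y ∨ v = z) → g x = n → ∃ h p q m c, Fan G P i h p q m c := by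
    intro x y z hx hy hz hxy hxz hyz hzero gx
    have h1 := (gadj y (Or.inl hy) z (Or.inl hz)).1 (htri y z hy hz hyz)
    have h2 : g y ≠ n := fun e => hxy (ginj x (Or.inl hx) y (Or.inl hy) (gx.trans e.symm))
    have h3 : g z ≠ n := fun e => hxz (ginj x (Or.inl hx) z (Or.inl hz) (gx.trans e.symm))
    by_cases hor : g y = g z + 1 ∨ (g y = 0 ∧ g z + 1 = n)
    · exact fan_oriented hi hx hy hz hxy hxz hyz hzero hn gle ginj gsurj gadj gx hor
    · refine fan_oriented hi hx hz hy hxz hxy hyz.symm ?_ hn gle ginj gsurj gadj gx (by omega)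
      intro v hv
      have := hzero v hv
      tauto
  by_cases ex : g x = n
  · exact key x y z hx hy hz hxy hxz hyz hzero ex
  by_cases ey : g y = n
  · exact key y x z hy hx hz hxy.symm hyz hxz (fun v hv => by have := hzero v hv; tauto) ey
  by_cases ez : g z = n
  · exact key z x y hz hx hy hxz.symm hyz.symm hxy (fun v hv => by have := hzero v hv; tauto) ez
  have axy := (gadj x (Or.inl hx) y (Or.inl hy)).1 (htri x y hx hy hxy)
  have axz := (gadj x (Or.inl hx) z (Or.inl hz)).1 (htri x z hx hz hxz)
  have ayz := (gadj y (Or.inl hy) z (Or.inl hz)).1 (htri y z hy hz hyz)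
  have hn3 : n = 3 := by omega
  have gx := gle x (Or.inl hx)
  have gy := gle y (Or.inl hy)
  have gz := gle z (Or.inl hz)
  have hub : ∀ v, P v = i → g v = n := by
    intro v hv
    have h0 := gle v (Or.inr hv)
    have hne : ∀ w, P w = 0 → g v ≠ g w := by
      intro w hw e
      have := ginj v (Or.inr hv) w (Or.inl hw) e
      subst this
      exact hi (hv.symm.trans hw)
    have h1 := hne x hx
    have h2 := hne y hy
    have h3 := hne z hz
    omega
  have hadj : ∀ v w, P v = 0 → P w = i → G.Adj v w := by
    intro v w hv hw
    rw [gadj v (Or.inl hv) w (Or.inr hw)]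
    have := hub w hw
    rcases hzero v hv with rfl | rfl | rfl <;> omega
  have hone : ∀ v w, P v = i → P w = i → v = w := fun v w hv hw =>
    ginj v (Or.inr hv) w (Or.inr hw) ((hub v hv).trans (hub w hw).symm)
  refine ⟨x, y, z, 1, fun _ => 1, hi, hx, hy, hz, hxy, hxz, hyz, hzero, le_refl _,
    fun _ _ => le_refl _, fun _ _ => le_refl _, ?_, fun v w hv hw _ => hone v w hv hw,
    fun v hv => hadj x v hx hv, fun v hv => by simp [hadj y v hy hv],
    fun v hv => by simp [hadj z v hz hv], ?_⟩
  · intro k h1 h2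
    obtain ⟨v, hv, e⟩ := gsurj n (le_refl _)
    refine ⟨v, ?_, by omega⟩
    rcases hv with hv | hv
    · exfalso
      rcases hzero v hv with rfl | rfl | rfl <;> omega
    · exact hv
  · intro v w hv hw
    have := hone v w hv hw
    subst this
    simp

/-- Bundled consequence of membership in the class: a triangle and three fans. -/
structure ThreeFans {V : Type*} (G : SimpleGraph V) (P : V → Fin 4) : Prop where
  tri : ∀ x y : V, P x = 0 → P y = 0 → x ≠ y → G.Adj x y
  sep : ∀ ⦃x y : V⦄, G.Adj x y → P x = 0 ∨ P y = 0 ∨ P x = P y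
  fan : ∀ i : Fin 4, i ≠ 0 → ∃ h p q m c, Fan G P i h p q m c

theorem InClassW.threeFans {V : Type*} {G : SimpleGraph V} (hG : InClassW G) :
    ∃ P, ThreeFans G P := by
  obtain ⟨P, h1, h2, h3, h4⟩ := hG
  obtain ⟨x, y, z, hxy, hxz, hyz, e⟩ := Set.ncard_eq_three.1 h1
  have hz : ∀ v, P v = 0 ↔ v = x ∨ v = y ∨ v = z := by
    intro v
    have : v ∈ P ⁻¹' {0} ↔ v ∈ ({x, y, z} : Set V) := by rw [e]
    simpa using this
  refine ⟨P, h2, ?_, ?_⟩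
  · intro a b hab
    obtain ⟨i, _, ha, hb⟩ := h4 hab
    rcases ha with ha | ha
    · exact Or.inl ha
    · rcases hb with hb | hb
      · exact Or.inr (Or.inl hb)
      · exact Or.inr (Or.inr (ha.trans hb.symm))
  · intro i hi
    exact exists_fan hi ((hz x).2 (by simp)) ((hz y).2 (by simp)) ((hz z).2 (by simp)) hxy hxz hyz
      (fun v hv => (hz v).1 hv) h2 (h3 i hi)

theorem Fan.exists_adj {V : Type*} {G : SimpleGraph V} {P : V → Fin 4} {i : Fin 4} {h p q : V}
    {m : ℕ} {c : V → ℕ} (F : Fan G P i h p q m c) (w : V) (hw : P w = 0) :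
    ∃ v, P v = i ∧ G.Adj w v := by
  rcases F.zero w hw with rfl | rfl | rfl
  · obtain ⟨v, hv, _⟩ := F.surj 1 (le_refl _) F.hm
    exact ⟨v, hv, F.adjh v hv⟩
  · obtain ⟨v, hv, e⟩ := F.surj 1 (le_refl _) F.hm
    exact ⟨v, hv, (F.adjp v hv).2 e⟩
  · obtain ⟨v, hv, e⟩ := F.surj m F.hm (le_refl _)
    exact ⟨v, hv, (F.adjq v hv).2 e⟩

theorem ThreeFans.nonplanar {V : Type*} {G : SimpleGraph V} {P : V → Fin 4}
    (T : ThreeFans G P) : ¬ Planar G := by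
  classical
  apply not_planar_of_K33
  have hF : ∀ k : Fin 3, ∃ h p q m c, Fan G P k.succ h p q m c := fun k =>
    T.fan k.succ (Fin.succ_ne_zero k)
  choose h p q m c F using hF
  obtain ⟨x, y, z, F0⟩ : ∃ x y z, Fan G P (Fin.succ 0) x y z (m 0) (c 0) := ⟨_, _, _, F 0⟩
  have hroot : ∀ k : Fin 3, ∃ v, P v = k.succ ∧ c k v = 1 := fun k =>
    (F k).surj 1 (le_refl _) (F k).hm
  choose t ht1 ht2 using hroot
  let col : V → Fin 3 ⊕ Fin 3 := fun v =>
    if hv : P v = 0 then .inl (if v = x then 0 else if v = y then 1 else 2)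
    else .inr ((P v).pred hv)
  let r : Fin 3 ⊕ Fin 3 → V := fun w => match w with
    | .inl k => ![x, y, z] k
    | .inr k => t k
  let rank : V → ℕ := fun v => if hv : P v = 0 then 0 else c ((P v).pred hv) v
  have colr : ∀ (k : Fin 3) v, P v = k.succ → col v = .inr k := by
    intro k v hv
    have : P v ≠ 0 := by rw [hv]; exact Fin.succ_ne_zero k
    simp only [col, dif_neg this]
    simp [hv]
  have rankr : ∀ (k : Fin 3) v, P v = k.succ → rank v = c k v := by
    intro k v hv
    have : P v ≠ 0 := by rw [hv]; exact Fin.succ_ne_zero k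
    simp only [rank, dif_neg this]
    simp [hv]
  have colx : col x = .inl 0 := by simp [col, F0.hh]
  have coly : col y = .inl 1 := by simp [col, F0.hp, F0.hhp.symm]
  have colz : col z = .inl 2 := by simp [col, F0.hq, F0.hhq.symm, F0.hpq.symm]
  have hr : ∀ w, col (r w) = w := by
    rintro (k | k)
    · fin_cases k
      · exact colx
      · exact coly
      · exact colz
    · exact colr k _ (ht1 k)
  have hPr : ∀ k : Fin 3, P (r (.inl k)) = 0 := by
    intro k
    fin_cases k
    · exact F0.hh
    · exact F0.hp
    · exact F0.hq
  refine isMinor_of_col col r rank hr ?_ ?_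
  · intro v
    by_cases hv : P v = 0
    · left
      rcases F0.zero v hv with rfl | rfl | rfl
      · rw [colx]; rfl
      · rw [coly]; rfl
      · rw [colz]; rfl
    · obtain ⟨k, hk⟩ := Fin.exists_succ_eq.2 hv
      have hk := hk.symm
      have h1 := (F k).lo v hk
      by_cases e : c k v = 1
      · left
        rw [colr k v hk]
        exact (F k).inj v (t k) hk (ht1 k) (e.trans (ht2 k).symm)
      · right
        have h2 := (F k).up v hk
        obtain ⟨w, hw, e'⟩ := (F k).surj (c k v - 1) (by omega) (by omega)
        refine ⟨w, (colr k w hw).trans (colr k v hk).symm, ?_, ?_⟩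
        · rw [rankr k w hw, rankr k v hk]; omega
        · rw [(F k).adj v w hk hw]; omega
  · have key : ∀ i j : Fin 3, ∃ v₁ v₂, col v₁ = .inl i ∧ col v₂ = .inr j ∧ G.Adj v₁ v₂ := by
      intro i j
      obtain ⟨v, hv, hadj⟩ := (F j).exists_adj _ (hPr i)
      exact ⟨_, v, hr _, colr j v hv, hadj⟩
    rintro (w₁ | w₁) (w₂ | w₂) hK
    · simp [K33] at hK
    · exact key _ _
    · obtain ⟨a, b, h1, h2, h3⟩ := key w₂ w₁
      exact ⟨b, a, h2, h1, h3.symm⟩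
    · simp [K33] at hK

/-- Removing one part entirely leaves a graph of the form "path plus two apex vertices". -/
theorem base_oriented {V : Type*} {G H : SimpleGraph V} {P : V → Fin 4}
    (T : ThreeFans G P) {i j k : Fin 4} (hij : i ≠ j) (hik : i ≠ k) (hjk : j ≠ k)
    {h p q h' p' h'' q'' z : V} {m m' m'' : ℕ} {c c' c'' : V → ℕ}
    (Fi : Fan G P i h p q m c) (Fj : Fan G P j h' p' z m' c') (Fk : Fan G P k h'' z q'' m'' c'')
    (hH : ∀ a b, H.Adj a b → G.Adj a b ∧ P a ≠ i ∧ P b ≠ i) : VK H := by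
  have cover : ∀ v, P v = 0 ∨ P v = i ∨ P v = j ∨ P v = k := by
    intro v
    have h1 := Fi.hi
    have h2 := Fj.hi
    have h3 := Fk.hi
    generalize P v = l
    revert i j k l
    intro i j k h1 h2 h3 _ _ _ _ _ _ l
    omega
  let f : V → ℕ := fun v => if P v = 0 then m' + 1 else if P v = j then c' v
    else if P v = k then m' + 1 + c'' v else m' + m'' + 2 + c v
  have f0 : ∀ v, P v = 0 → f v = m' + 1 := fun v hv => by simp [f, hv]
  have fj : ∀ v, P v = j → f v = c' v := fun v hv => by simp [f, hv, Fj.hi]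
  have fk : ∀ v, P v = k → f v = m' + 1 + c'' v := fun v hv => by
    simp [f, hv, Fk.hi, hjk.symm]
  have fi : ∀ v, P v = i → f v = m' + m'' + 2 + c v := fun v hv => by
    simp [f, hv, Fi.hi, hij, hik]
  have zz : ∀ v, P v = 0 → v ≠ h' → v ≠ p' → v = z := by
    intro v hv h1 h2
    have := Fj.zero v hv
    tauto
  have zadjj := Fj.adjq
  have zadjk := Fk.adjp
  refine VK.of_path_join h' p' Fj.hhp f ?_ (m' + m'' + m + 3) ?_ ?_
  · intro a b a1 a2 b1 b2 e
    rcases cover a with ha | ha | ha | ha <;> rcases cover b with hb | hb | hb | hb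
    · rw [zz a ha a1 a2, zz b hb b1 b2]
    · rw [f0 a ha, fi b hb] at e; omega
    · rw [f0 a ha, fj b hb] at e; have := Fj.up b hb; omega
    · rw [f0 a ha, fk b hb] at e; have := Fk.lo b hb; omega
    · rw [fi a ha, f0 b hb] at e; omega
    · rw [fi a ha, fi b hb] at e; exact Fi.inj a b ha hb (by omega)
    · rw [fi a ha, fj b hb] at e; have := Fj.up b hb; omega
    · rw [fi a ha, fk b hb] at e; have := Fk.up b hb; omega
    · rw [fj a ha, f0 b hb] at e; have := Fj.up a ha; omega
    · rw [fj a ha, fi b hb] at e; have := Fj.up a ha; omega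
    · rw [fj a ha, fj b hb] at e; exact Fj.inj a b ha hb e
    · rw [fj a ha, fk b hb] at e; have := Fj.up a ha; omega
    · rw [fk a ha, f0 b hb] at e; have := Fk.lo a ha; omega
    · rw [fk a ha, fi b hb] at e; have := Fk.up a ha; omega
    · rw [fk a ha, fj b hb] at e; have := Fj.up b hb; omega
    · rw [fk a ha, fk b hb] at e; exact Fk.inj a b ha hb (by omega)
  · intro v
    rcases cover v with hv | hv | hv | hv
    · rw [f0 v hv]; omega
    · rw [fi v hv]; have := Fi.up v hv; omega
    · rw [fj v hv]; have := Fj.up v hv; omega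
    · rw [fk v hv]; have := Fk.up v hv; omega
  · intro a b hab a1 a2 b1 b2 hlt w _ _
    obtain ⟨hG, hai, hbi⟩ := hH a b hab
    suffices f b = f a + 1 by omega
    have hs := T.sep hG
    rcases cover a with ha | ha | ha | ha
    · have := zz a ha a1 a2
      subst this
      rcases cover b with hb | hb | hb | hb
      · have := zz b hb b1 b2
        exact absurd this.symm hG.ne
      · exact absurd hb hbi
      · rw [f0 a ha, fj b hb] at hlt; have := Fj.up b hb; omega
      · rw [f0 a ha, fk b hb, (zadjk b hb).1 hG]
    · exact absurd ha hai
    · rcases cover b with hb | hb | hb | hb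
      · have := zz b hb b1 b2
        subst this
        rw [f0 b hb, fj a ha, (zadjj a ha).1 hG.symm]
      · exact absurd hb hbi
      · rw [fj a ha, fj b hb] at hlt ⊢
        have := (Fj.adj a b ha hb).1 hG
        omega
      · rw [ha, hb] at hs
        have := Fj.hi
        have := Fk.hi
        tauto
    · rcases cover b with hb | hb | hb | hb
      · rw [f0 b hb, fk a ha] at hlt; omega
      · exact absurd hb hbi
      · rw [ha, hb] at hs
        have := Fj.hi
        have := Fk.hi
        have := hjk.symm
        tauto
      · rw [fk a ha, fk b hb] at hlt ⊢
        have := (Fk.adj a b ha hb).1 hG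
        omega

theorem ThreeFans.base {V : Type*} {G H : SimpleGraph V} {P : V → Fin 4}
    (T : ThreeFans G P) {i : Fin 4} (hi : i ≠ 0)
    (hH : ∀ a b, H.Adj a b → G.Adj a b ∧ P a ≠ i ∧ P b ≠ i) : VK H := by
  obtain ⟨j, k, hj, hk, hij, hik, hjk⟩ : ∃ j k : Fin 4, j ≠ 0 ∧ k ≠ 0 ∧ i ≠ j ∧ i ≠ k ∧ j ≠ k := by
    clear hH
    revert i
    decide
  obtain ⟨h, p, q, m, c, Fi⟩ := T.fan i hi
  obtain ⟨h', p', q', m', c', Fj⟩ := T.fan j hj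
  obtain ⟨h'', p'', q'', m'', c'', Fk⟩ := T.fan k hk
  obtain ⟨z, hz, z1, z2⟩ : ∃ z, P z = 0 ∧ z ≠ h' ∧ z ≠ h'' := by
    by_cases e : p' = h''
    · exact ⟨q', Fj.hq, Fj.hhq.symm, fun e' => Fj.hpq (e.trans e'.symm)⟩
    · exact ⟨p', Fj.hp, Fj.hhp.symm, e⟩
  obtain ⟨_, _, Fj'⟩ := Fj.orient_last hz z1
  obtain ⟨_, _, Fk'⟩ := Fk.orient_first hz z2
  exact base_oriented T hij hik hjk Fi Fj' Fk' hH

/-- Cutting the rim of one of the three wheels gives a graph with a certificate. -/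
theorem ThreeFans.cut {V : Type*} {G D : SimpleGraph V} {P : V → Fin 4}
    (T : ThreeFans G P) {i : Fin 4} {h p q m c} (F : Fan G P i h p q m c) (hD : D ≤ G)
    (hkeep : ∀ a, G.Adj h a → D.Adj h a) (j : ℕ) (hj : j ≤ m)
    (c1 : ∀ a b, P a = i → c a = j → P b = i → c b = j + 1 → ¬ D.Adj a b)
    (c2 : j = 0 → ∀ b, P b = i → c b = 1 → ¬ D.Adj p b)
    (c3 : j = m → ∀ a, P a = i → c a = m → ¬ D.Adj q a) : VK D := by
  obtain ⟨S, hS⟩ := F.exists_finset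
  let H : SimpleGraph V := SimpleGraph.fromRel fun a b => G.Adj a b ∧ P a ≠ i ∧ P b ≠ i
  have hH : ∀ a b, H.Adj a b ↔ G.Adj a b ∧ P a ≠ i ∧ P b ≠ i := by
    intro a b
    simp only [H, SimpleGraph.fromRel_adj]
    constructor
    · rintro ⟨_, h | h⟩
      · exact h
      · exact ⟨h.1.symm, h.2.2, h.2.1⟩
    · exact fun h => ⟨h.1.ne, Or.inl h⟩
  have hP0 : ∀ a, P a = 0 → a ∉ S := fun a ha hs => F.hi (((hS a).1 hs).symm.trans ha)
  refine VK.of_elimination S (fun v => if c v ≤ j then j - c v else c v)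
    (T.base F.hi (fun a b => (hH a b).1)) ?_ ?_
  · intro y z hyz hy hz
    rw [hS] at hy hz
    exact (hH y z).2 ⟨hD hyz, hy, hz⟩
  · intro v hvS
    have hv := (hS v).1 hvS
    have hlo := F.lo v hv
    have hup := F.up v hv
    have nvh : ∀ a, P a = 0 → a ≠ v := fun a ha e => F.hi (by rw [← hv, ← e, ha])
    -- the possible neighbours of v
    have nb : ∀ w, D.Adj v w → w = h ∨ (w = p ∧ c v = 1) ∨ (w = q ∧ c v = m) ∨
        (P w = i ∧ (c v + 1 = c w ∨ c w + 1 = c v)) := by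
      intro w hw
      have hg := hD hw
      have hs := T.sep hg
      rw [hv] at hs
      rcases hs with hs | hs | hs
      · exact absurd hs F.hi
      · rcases F.zero w hs with rfl | rfl | rfl
        · exact Or.inl rfl
        · exact Or.inr (Or.inl ⟨rfl, (F.adjp v hv).1 hg.symm⟩)
        · exact Or.inr (Or.inr (Or.inl ⟨rfl, (F.adjq v hv).1 hg.symm⟩))
      · exact Or.inr (Or.inr (Or.inr ⟨hs.symm, (F.adj v w hv hs.symm).1 hg⟩))
    by_cases hc : c v ≤ j
    · -- left side: previous vertex
      have right : ∀ w, D.Adj v w → w = h ∨ (w = p ∧ c v = 1) ∨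
          (P w = i ∧ c w + 1 = c v) ∨ (P w = i ∧ c v + 1 = c w ∧ c w ≤ j) := by
        intro w hw
        rcases nb w hw with e | e | ⟨rfl, e⟩ | ⟨e1, e2 | e2⟩
        · exact Or.inl e
        · exact Or.inr (Or.inl e)
        · exact absurd hw.symm (c3 (by omega) v hv e)
        · rcases Nat.lt_or_ge j (c w) with h1 | h1
          · exact absurd hw (c1 v w hv (by omega) e1 (by omega))
          · exact Or.inr (Or.inr (Or.inr ⟨e1, e2, h1⟩))
        · exact Or.inr (Or.inr (Or.inl ⟨e1, e2⟩))
      by_cases e1 : c v = 1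
      · refine ⟨p, h, (hkeep p (T.tri h p F.hh F.hp F.hhp)).symm, nvh p F.hp, nvh h F.hh,
          fun hs => absurd hs (hP0 p F.hp), fun hs => absurd hs (hP0 h F.hh), ?_⟩
        intro w hw
        rcases right w hw with e | ⟨e, _⟩ | ⟨e2, e3⟩ | ⟨e2, e3, e4⟩
        · exact Or.inr (Or.inl e)
        · exact Or.inl e
        · have := F.lo w e2
          omega
        · refine Or.inr (Or.inr ⟨(hS w).2 e2, ?_⟩)
          rw [if_pos e4, if_pos hc]; omega
      · obtain ⟨a, ha, ea⟩ := F.surj (c v - 1) (by omega) (by omega)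
        refine ⟨a, h, (hkeep a (F.adjh a ha)).symm, ?_, nvh h F.hh, ?_,
          fun hs => absurd hs (hP0 h F.hh), ?_⟩
        · rintro rfl
          omega
        · intro _
          rw [if_pos hc, if_pos (by omega)]; omega
        intro w hw
        rcases right w hw with e | ⟨_, e⟩ | ⟨e2, e3⟩ | ⟨e2, e3, e4⟩
        · exact Or.inr (Or.inl e)
        · exact absurd e e1
        · exact Or.inl (F.inj w a e2 ha (by omega))
        · refine Or.inr (Or.inr ⟨(hS w).2 e2, ?_⟩)
          rw [if_pos e4, if_pos hc]; omega
    · have left : ∀ w, D.Adj v w → w = h ∨ (w = q ∧ c v = m) ∨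
          (P w = i ∧ c w = c v + 1) ∨ (P w = i ∧ c w + 1 = c v ∧ ¬ c w ≤ j) := by
        intro w hw
        rcases nb w hw with e | ⟨rfl, e⟩ | e | ⟨e1, e2 | e2⟩
        · exact Or.inl e
        · exact absurd hw.symm (c2 (by omega) v hv e)
        · exact Or.inr (Or.inl e)
        · exact Or.inr (Or.inr (Or.inl ⟨e1, e2.symm⟩))
        · by_cases h1 : c w ≤ j
          · exact absurd hw.symm (c1 w v e1 (by omega) hv (by omega))
          · exact Or.inr (Or.inr (Or.inr ⟨e1, e2, h1⟩))
      by_cases e1 : c v = m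
      · refine ⟨q, h, (hkeep q (T.tri h q F.hh F.hq F.hhq)).symm, nvh q F.hq, nvh h F.hh,
          fun hs => absurd hs (hP0 q F.hq), fun hs => absurd hs (hP0 h F.hh), ?_⟩
        intro w hw
        rcases left w hw with e | ⟨e, _⟩ | ⟨e2, e3⟩ | ⟨e2, e3, e4⟩
        · exact Or.inr (Or.inl e)
        · exact Or.inl e
        · have := F.up w e2
          omega
        · refine Or.inr (Or.inr ⟨(hS w).2 e2, ?_⟩)
          rw [if_neg e4, if_neg hc]; omega
      · obtain ⟨a, ha, ea⟩ := F.surj (c v + 1) (by omega) (by omega)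
        refine ⟨a, h, (hkeep a (F.adjh a ha)).symm, ?_, nvh h F.hh, ?_,
          fun hs => absurd hs (hP0 h F.hh), ?_⟩
        · rintro rfl
          omega
        · intro _
          rw [if_neg hc, if_neg (by omega)]; omega
        intro w hw
        rcases left w hw with e | ⟨_, e⟩ | ⟨e2, e3⟩ | ⟨e2, e3, e4⟩
        · exact Or.inr (Or.inl e)
        · exact absurd e e1
        · exact Or.inl (F.inj w a e2 ha (by omega))
        · refine Or.inr (Or.inr ⟨(hS w).2 e2, ?_⟩)
          rw [if_neg e4, if_neg hc]; omega

theorem ThreeFans.delete_rim {V : Type*} {G : SimpleGraph V} {P : V → Fin 4}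
    (T : ThreeFans G P) {i : Fin 4} {h p q m c} (F : Fan G P i h p q m c) {u v : V}
    (hv : P v = i) (huv : G.Adj u v) (hu : u ≠ h) : VK (G.deleteEdges {s(u, v)}) := by
  have hvh : v ≠ h := by
    rintro rfl
    exact F.hi (hv.symm.trans F.hh)
  have hle : G.deleteEdges {s(u, v)} ≤ G := SimpleGraph.deleteEdges_le _
  have hno : ¬ (G.deleteEdges {s(u, v)}).Adj u v := by
    rw [SimpleGraph.deleteEdges_adj]; simp
  have hkeep : ∀ a, G.Adj h a → (G.deleteEdges {s(u, v)}).Adj h a := by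
    intro a ha
    rw [SimpleGraph.deleteEdges_adj]
    refine ⟨ha, ?_⟩
    simp only [Set.mem_singleton_iff, Sym2.eq_iff]
    rintro (⟨e, _⟩ | ⟨e, _⟩)
    · exact hu e.symm
    · exact hvh e.symm
  have hlo := F.lo v hv
  have hup := F.up v hv
  have hm := F.hm
  have hs := T.sep huv
  rw [hv] at hs
  rcases hs with hs | hs | hs
  · rcases F.zero u hs with rfl | rfl | rfl
    · exact absurd rfl hu
    · have hc := (F.adjp v hv).1 huv
      refine T.cut F hle hkeep 0 (by omega) ?_ ?_ (fun e => by omega)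
      · intro a b ha ea
        have := F.lo a ha
        omega
      · intro _ b hb eb
        rw [F.inj b v hb hv (by omega)]
        exact hno
    · have hc := (F.adjq v hv).1 huv
      refine T.cut F hle hkeep m (le_refl _) ?_ (fun e => by omega) ?_
      · intro a b ha ea hb eb
        have := F.up b hb
        omega
      · intro _ b hb eb
        rw [F.inj b v hb hv (by omega)]
        exact hno
  · exact absurd hs F.hi
  · have hulo := F.lo u hs
    have huup := F.up u hs
    rcases (F.adj u v hs hv).1 huv with e | e
    · refine T.cut F hle hkeep (c u) (by omega) ?_ (fun e => by omega) (fun e => by omega)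
      intro a b ha ea hb eb
      rw [F.inj a u ha hs ea, F.inj b v hb hv (by omega)]
      exact hno
    · refine T.cut F hle hkeep (c v) (by omega) ?_ (fun e => by omega) (fun e => by omega)
      intro a b ha ea hb eb
      rw [F.inj a v ha hv ea, F.inj b u hb hs (by omega)]
      exact fun h => hno h.symm

theorem ThreeFans.contract_spoke {V : Type*} {G : SimpleGraph V} {P : V → Fin 4}
    (T : ThreeFans G P) {i : Fin 4} {h p q m c} (F : Fan G P i h p q m c) {v : V}
    (hv : P v = i) : VK (contractEdge G h v) := by
  have hlo := F.lo v hv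
  have hup := F.up v hv
  have key : ∀ w, G.Adj w v → w ≠ h → VK (contractEdge G h v) := by
    intro w hw hwh
    have h1 := T.delete_rim F hv hw hwh
    rw [Sym2.eq_swap] at h1
    refine h1.mono (contract_le_delete ?_)
    intro b hb hbh
    have hs := T.sep hb
    rw [hv] at hs
    rcases hs with hs | hs | hs
    · exact absurd hs F.hi
    · exact T.tri h b F.hh hs hbh.symm
    · exact F.adjh b hs.symm
  by_cases e : c v = 1
  · exact key p ((F.adjp v hv).2 e) F.hhp.symm
  · obtain ⟨w, hw, ew⟩ := F.surj (c v - 1) (by omega) (by omega)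
    refine key w ((F.adj w v hw hv).2 (by omega)) ?_
    rintro rfl
    exact F.hi (hw.symm.trans F.hh)

theorem ThreeFans.contract_tri {V : Type*} {G : SimpleGraph V} {P : V → Fin 4}
    (T : ThreeFans G P) {u v : V} (hu : P u = 0) (hv : P v = 0) (huv : u ≠ v) :
    VK (contractEdge G u v) := by
  obtain ⟨h₁, p₁, q₁, m₁, c₁, F₁⟩ := T.fan 1 (by decide)
  obtain ⟨h₂, p₂, q₂, m₂, c₂, F₂⟩ := T.fan 2 (by decide)
  obtain ⟨h₃, p₃, q₃, m₃, c₃, F₃⟩ := T.fan 3 (by decide)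
  obtain ⟨t, htu, ht⟩ : ∃ t, t ≠ u ∧ ∀ w, P w = 0 → w = u ∨ w = v ∨ w = t := by
    have hz := F₁.zero
    have h1 := F₁.hhp
    have h2 := F₁.hhq
    have h3 := F₁.hpq
    rcases hz u hu with rfl | rfl | rfl <;> rcases hz v hv with rfl | rfl | rfl
    · exact absurd rfl huv
    · exact ⟨_, h2.symm, fun w hw => by have := hz w hw; tauto⟩
    · exact ⟨_, h1.symm, fun w hw => by have := hz w hw; tauto⟩
    · exact ⟨_, h3.symm, fun w hw => by have := hz w hw; tauto⟩
    · exact absurd rfl huv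
    · exact ⟨_, h1, fun w hw => by have := hz w hw; tauto⟩
    · exact ⟨_, h3, fun w hw => by have := hz w hw; tauto⟩
    · exact ⟨_, h2, fun w hw => by have := hz w hw; tauto⟩
    · exact absurd rfl huv
  have cover : ∀ w, P w = 0 ∨ P w = 1 ∨ P w = 2 ∨ P w = 3 := by
    intro w
    generalize P w = l
    revert l; decide
  let f : V → ℕ := fun w => if P w = 0 then 0 else if P w = 1 then c₁ w
    else if P w = 2 then m₁ + c₂ w else m₁ + m₂ + c₃ w
  have f0 : ∀ w, P w = 0 → f w = 0 := fun w hw => by simp [f, hw]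
  have f1 : ∀ w, P w = 1 → f w = c₁ w := fun w hw => by simp [f, hw]
  have f2 : ∀ w, P w = 2 → f w = m₁ + c₂ w := fun w hw => by simp [f, hw]
  have f3 : ∀ w, P w = 3 → f w = m₁ + m₂ + c₃ w := fun w hw => by simp [f, hw]
  have b1 : ∀ w, P w = 1 → 1 ≤ f w ∧ f w ≤ m₁ := fun w hw => by
    have := F₁.lo w hw
    have := F₁.up w hw
    rw [f1 w hw]; omega
  have b2 : ∀ w, P w = 2 → m₁ + 1 ≤ f w ∧ f w ≤ m₁ + m₂ := fun w hw => by
    have := F₂.lo w hw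
    have := F₂.up w hw
    rw [f2 w hw]; omega
  have b3 : ∀ w, P w = 3 → m₁ + m₂ + 1 ≤ f w ∧ f w ≤ m₁ + m₂ + m₃ := fun w hw => by
    have := F₃.lo w hw
    have := F₃.up w hw
    rw [f3 w hw]; omega
  have zz : ∀ w, P w = 0 → w ≠ u → w ≠ t → w = v := by
    intro w hw h1 h2
    have := ht w hw
    tauto
  refine VK.of_path_join u t htu.symm f ?_ (m₁ + m₂ + m₃ + 1) ?_ ?_
  · intro a b a1 a2 a3 a4 e
    rcases cover a with ha | ha | ha | ha <;> rcases cover b with hb | hb | hb | hb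
    · rw [zz a ha a1 a2, zz b hb a3 a4]
    · have := f0 a ha; have := b1 b hb; omega
    · have := f0 a ha; have := b2 b hb; omega
    · have := f0 a ha; have := b3 b hb; omega
    · have := b1 a ha; have := f0 b hb; omega
    · rw [f1 a ha, f1 b hb] at e; exact F₁.inj a b ha hb e
    · have := b1 a ha; have := b2 b hb; omega
    · have := b1 a ha; have := b3 b hb; omega
    · have := b2 a ha; have := f0 b hb; omega
    · have := b2 a ha; have := b1 b hb; omega
    · rw [f2 a ha, f2 b hb] at e; exact F₂.inj a b ha hb (by omega)
    · have := b2 a ha; have := b3 b hb; omega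
    · have := b3 a ha; have := f0 b hb; omega
    · have := b3 a ha; have := b1 b hb; omega
    · have := b3 a ha; have := b2 b hb; omega
    · rw [f3 a ha, f3 b hb] at e; exact F₃.inj a b ha hb (by omega)
  · intro w
    rcases cover w with hw | hw | hw | hw
    · have := f0 w hw; omega
    · have := b1 w hw; omega
    · have := b2 w hw; omega
    · have := b3 w hw; omega
  · intro a b hab a1 a2 a3 a4 hlt w _ _
    rw [contractEdge_adj] at hab
    obtain ⟨_, hav, hbv, hG⟩ := hab
    replace hG : G.Adj a b := by
      rcases hG with hG | ⟨e, _⟩ | ⟨e, _⟩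
      · exact hG
      · exact absurd e a1
      · exact absurd e a3
    have ha0 : P a ≠ 0 := fun e => hav (zz a e a1 a2)
    have hb0 : P b ≠ 0 := fun e => hbv (zz b e a3 a4)
    have hs : P a = P b := by
      have := T.sep hG
      tauto
    suffices f b = f a + 1 by omega
    rcases cover b with hb | hb | hb | hb
    · exact absurd hb hb0
    · have ha := hs.trans hb
      rw [f1 a ha, f1 b hb] at hlt ⊢
      have := (F₁.adj a b ha hb).1 hG
      omega
    · have ha := hs.trans hb
      rw [f2 a ha, f2 b hb] at hlt ⊢
      have := (F₂.adj a b ha hb).1 hG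
      omega
    · have ha := hs.trans hb
      rw [f3 a ha, f3 b hb] at hlt ⊢
      have := (F₃.adj a b ha hb).1 hG
      omega

theorem ThreeFans.almostVK {V : Type*} {G : SimpleGraph V} {P : V → Fin 4}
    (T : ThreeFans G P) : AlmostVK G := by
  have key : ∀ u v, G.Adj u v → P v ≠ 0 →
      VK (G.deleteEdges {s(u, v)}) ∨ VK (contractEdge G u v) := by
    intro u v huv hv
    obtain ⟨h, p, q, m, c, F⟩ := T.fan (P v) hv
    by_cases e : u = h
    · subst e
      exact Or.inr (T.contract_spoke F rfl)
    · exact Or.inl (T.delete_rim F rfl huv e)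
  intro u v huv
  by_cases hv : P v = 0
  · by_cases hu : P u = 0
    · exact Or.inr (T.contract_tri hu hv huv.ne)
    · rcases key v u huv.symm hu with h | h
      · left
        rw [Sym2.eq_swap]
        exact h
      · exact Or.inr (h.contract_swap huv.ne.symm)
  · exact key u v huv hv

/-- Every Möbius ladder, every double wheel, and every graph in 𝒲 is almost-planar;
consequently every 3-connected nonplanar minor of one of these is almost-planar. -/
theorem stmt1 :
    (∀ n : ℕ, 3 ≤ n → AlmostPlanar (mobiusLadder n)) ∧
    (∀ n : ℕ, 3 ≤ n → AlmostPlanar (doubleWheel n)) ∧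
    (∀ (U : Type) (H : SimpleGraph U), InClassW H → AlmostPlanar H) ∧
    (∀ (V : Type) [Fintype V] (G : SimpleGraph V), KConnected G 3 → ¬ Planar G →
      ((∃ n, 3 ≤ n ∧ IsMinor G (mobiusLadder n)) ∨
       (∃ n, 3 ≤ n ∧ IsMinor G (doubleWheel n)) ∨
       (∃ (U : Type) (H : SimpleGraph U), InClassW H ∧ IsMinor G H)) →
      AlmostPlanar G) := by
  refine ⟨fun n hn => (ml_almostVK hn).almostPlanar (ml_nonplanar hn),
    fun n hn => (dw_almostVK hn).almostPlanar (dw_nonplanar hn), ?_, ?_⟩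
  · intro U H hH
    obtain ⟨P, T⟩ := hH.threeFans
    exact T.almostVK.almostPlanar T.nonplanar
  · intro V _ G _ hG h
    rcases h with ⟨n, hn, h⟩ | ⟨n, hn, h⟩ | ⟨U, H, hH, h⟩
    · exact ((ml_almostVK hn).minor h).almostPlanar hG
    · exact ((dw_almostVK hn).minor h).almostPlanar hG
    · obtain ⟨P, T⟩ := hH.threeFans
      exact (T.almostVK.minor h).almostPlanar hG
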